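/- arXiv:1810.02839 — 2 statements merged into one kernel-verified Lean document; each statement's English description precedes it below -/
import Mathlib

section
/- There exists a constant c > 0 such that for every integer n ≥ 2, every set S of n points in the plane in convex position, and any two trees T, T' ∈ 𝒯(S), the tree T can be transformed into T' by a sequence of at most c·log n simultaneous edge slides. -/
open scoped Classical

noncomputable section

/-- Points in the plane. -/
abbrev Pt : Type := ℝ × ℝ

/-- The closed straight-line segment spanned by an (unordered) edge. -/
def segOf (e : Sym2 Pt) : Set Pt :=
  Sym2.lift ⟨fun p q => segment ℝ p q, fun p q => segment_symm ℝ p q⟩ e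

/-- The set of endpoints of an edge. -/
def epts (e : Sym2 Pt) : Set Pt := {p | p ∈ e}

/-- Two edges intersect in at most common endpoints (they do not cross). -/
def NoCrossPair (e f : Sym2 Pt) : Prop := segOf e ∩ segOf f ⊆ epts e ∩ epts f

/-- A set of edges is noncrossing: any two distinct edges meet in at most a common endpoint. -/
def NoCross (E : Finset (Sym2 Pt)) : Prop := ∀ e ∈ E, ∀ f ∈ E, e ≠ f → NoCrossPair e f

/-- `E` is the edge set of a noncrossing straight-line spanning tree on the point set `S`:
all edges are nondegenerate with endpoints in `S`, pairwise noncrossing, there are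
`|S| - 1` of them, and they connect all of `S`. -/
def IsPST (S : Finset Pt) (E : Finset (Sym2 Pt)) : Prop :=
  (∀ e ∈ E, ¬ e.IsDiag ∧ ∀ p ∈ e, p ∈ S) ∧
  NoCross E ∧ E.card + 1 = S.card ∧
  ∀ p ∈ S, ∀ q ∈ S, Relation.ReflTransGen (fun a b => s(a, b) ∈ E) p q

/-- `S` is in general position: no three of its points are collinear. -/
def GenPos (S : Finset Pt) : Prop :=
  ∀ p ∈ S, ∀ q ∈ S, ∀ r ∈ S, p ≠ q → p ≠ r → q ≠ r → ¬ Collinear ℝ ({p, q, r} : Set Pt)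

/-- `S` is in convex position: every point of `S` is a vertex of the convex hull of `S`. -/
def ConvexPos (S : Finset Pt) : Prop :=
  ∀ p ∈ S, p ∉ convexHull ℝ ((S : Set Pt) \ {p})

/-- The open interior of the triangle with vertices `p`, `q`, `r`. -/
def triInt (p q r : Pt) : Set Pt := interior (convexHull ℝ ({p, q, r} : Set Pt))

/-- `y` can be reached from `x` by a sequence of at most `m` `step`-operations. -/
def ReachesIn {α : Type*} (step : α → α → Prop) (m : ℕ) (x y : α) : Prop :=
  ∃ k ≤ m, ∃ f : ℕ → α, f 0 = x ∧ f k = y ∧ ∀ i < k, step (f i) (f (i + 1))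

/-- A simultaneous rotation from `E₁` to `E₂`: a bijection `π` between the removed and the
inserted edges such that each `e` shares an endpoint with `π e` and `π e` crosses no edge
of `E₁`. -/
def SimRotation (S : Finset Pt) (E₁ E₂ : Finset (Sym2 Pt)) : Prop :=
  IsPST S E₁ ∧ IsPST S E₂ ∧ ∃ π : Sym2 Pt → Sym2 Pt,
    Set.BijOn π ↑(E₁ \ E₂) ↑(E₂ \ E₁) ∧
    ∀ e ∈ E₁ \ E₂, (∃ p, p ∈ e ∧ p ∈ π e) ∧ ∀ f ∈ E₁, NoCrossPair (π e) f

/-- An empty-triangle rotation replaces an edge `pq` by an adjacent edge `pr` such that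
no edge of either tree meets the interior of the triangle `pqr`. -/
def EmptyTriRot (S : Finset Pt) (E₁ E₂ : Finset (Sym2 Pt)) : Prop :=
  IsPST S E₁ ∧ IsPST S E₂ ∧ ∃ p q r : Pt,
    E₁ \ E₂ = {s(p, q)} ∧ E₂ \ E₁ = {s(p, r)} ∧
    ∀ g ∈ E₁ ∪ E₂, Disjoint (segOf g) (triInt p q r)

/-- A simultaneous empty-triangle rotation. -/
def SimEmptyTriRot (S : Finset Pt) (E₁ E₂ : Finset (Sym2 Pt)) : Prop :=
  IsPST S E₁ ∧ IsPST S E₂ ∧ ∃ π : Sym2 Pt → Sym2 Pt,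
    Set.BijOn π ↑(E₁ \ E₂) ↑(E₂ \ E₁) ∧
    ∀ e ∈ E₁ \ E₂, ∃ p q r : Pt, e = s(p, q) ∧ π e = s(p, r) ∧
      ∀ g ∈ E₁ ∪ E₂, Disjoint (segOf g) (triInt p q r)

/-- An edge slide replaces `pq` by `pr`, where `qr` is an edge of both trees and no edge of
either tree meets the interior of the triangle `pqr`. -/
def EdgeSlide (S : Finset Pt) (E₁ E₂ : Finset (Sym2 Pt)) : Prop :=
  IsPST S E₁ ∧ IsPST S E₂ ∧ ∃ p q r : Pt,
    E₁ \ E₂ = {s(p, q)} ∧ E₂ \ E₁ = {s(p, r)} ∧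
    s(q, r) ∈ E₁ ∧ s(q, r) ∈ E₂ ∧
    ∀ g ∈ E₁ ∪ E₂, Disjoint (segOf g) (triInt p q r)

/-- A simultaneous edge slide. -/
def SimEdgeSlide (S : Finset Pt) (E₁ E₂ : Finset (Sym2 Pt)) : Prop :=
  IsPST S E₁ ∧ IsPST S E₂ ∧ ∃ π : Sym2 Pt → Sym2 Pt,
    Set.BijOn π ↑(E₁ \ E₂) ↑(E₂ \ E₁) ∧
    ∀ e ∈ E₁ \ E₂, ∃ p q r : Pt, e = s(p, q) ∧ π e = s(p, r) ∧
      s(q, r) ∈ E₁ ∧ s(q, r) ∈ E₂ ∧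
      ∀ g ∈ E₁ ∪ E₂, Disjoint (segOf g) (triInt p q r)

/-- `e` is an edge of the convex hull of `S`: it joins two distinct points of `S` and its
segment lies on the boundary of the convex hull of `S`. -/
def IsHullEdge (S : Finset Pt) (e : Sym2 Pt) : Prop :=
  ∃ u v : Pt, e = s(u, v) ∧ u ∈ S ∧ v ∈ S ∧ u ≠ v ∧
    segment ℝ u v ⊆ frontier (convexHull ℝ (S : Set Pt))

/-- The spanning star centered at `v`. -/
def starAt (S : Finset Pt) (v : Pt) : Finset (Sym2 Pt) := (S.erase v).image (fun w => s(v, w))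

/-- An edge-labeled tree: an edge set together with a labeling function. -/
abbrev LTree := Finset (Sym2 Pt) × (Sym2 Pt → ℕ)

/-- `T` is an edge-labeled noncrossing straight-line spanning tree on `S`: its edge set is in
`𝒯(S)` and its labeling is a bijection from the edges onto `{1, …, |S| - 1}`
(normalized to `0` on non-edges). -/
def IsLabeledPST (S : Finset Pt) (T : LTree) : Prop :=
  IsPST S T.1 ∧ Set.BijOn T.2 ↑T.1 (Set.Icc 1 (S.card - 1)) ∧ ∀ e, e ∉ T.1 → T.2 e = 0

/-- A simultaneous exchange on edge-labeled trees: an arbitrary bijection between removed and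
inserted edges transferring labels, all common edges keeping their labels. -/
def LabSimExchange (S : Finset Pt) (T₁ T₂ : LTree) : Prop :=
  IsLabeledPST S T₁ ∧ IsLabeledPST S T₂ ∧ ∃ π : Sym2 Pt → Sym2 Pt,
    Set.BijOn π ↑(T₁.1 \ T₂.1) ↑(T₂.1 \ T₁.1) ∧
    (∀ e ∈ T₁.1 \ T₂.1, T₂.2 (π e) = T₁.2 e) ∧
    ∀ e ∈ T₁.1 ∩ T₂.1, T₂.2 e = T₁.2 e

/-- A rotation on edge-labeled trees: the removed and inserted edges share an endpoint and do
not cross, the label of the removed edge is transferred, and all other labels are kept. -/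
def LabRotation (S : Finset Pt) (T₁ T₂ : LTree) : Prop :=
  IsLabeledPST S T₁ ∧ IsLabeledPST S T₂ ∧ ∃ e₁ e₂ : Sym2 Pt,
    T₁.1 \ T₂.1 = {e₁} ∧ T₂.1 \ T₁.1 = {e₂} ∧
    (∃ p, p ∈ e₁ ∧ p ∈ e₂) ∧ NoCrossPair e₁ e₂ ∧
    T₂.2 e₂ = T₁.2 e₁ ∧ ∀ e ∈ T₁.1 ∩ T₂.1, T₂.2 e = T₁.2 e

/-- An edge slide on edge-labeled trees, transferring the label of the slid edge. -/
def LabEdgeSlide (S : Finset Pt) (T₁ T₂ : LTree) : Prop :=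
  IsLabeledPST S T₁ ∧ IsLabeledPST S T₂ ∧ ∃ p q r : Pt,
    T₁.1 \ T₂.1 = {s(p, q)} ∧ T₂.1 \ T₁.1 = {s(p, r)} ∧
    s(q, r) ∈ T₁.1 ∧ s(q, r) ∈ T₂.1 ∧
    (∀ g ∈ T₁.1 ∪ T₂.1, Disjoint (segOf g) (triInt p q r)) ∧
    T₂.2 (s(p, r)) = T₁.2 (s(p, q)) ∧ ∀ e ∈ T₁.1 ∩ T₂.1, T₂.2 e = T₁.2 e


section comb
variable {α : Type*}

/-- Interleaving of two pairs with respect to the key `k`. -/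
def Cr (k : α → ℕ) (a b c d : α) : Prop :=
  ((k a < k c ∧ k c < k b ∨ k b < k c ∧ k c < k a) ∧
    (k d < k a ∧ k d < k b ∨ k a < k d ∧ k b < k d)) ∨
  ((k a < k d ∧ k d < k b ∨ k b < k d ∧ k d < k a) ∧
    (k c < k a ∧ k c < k b ∨ k a < k c ∧ k b < k c))

def NC (k : α → ℕ) (E : Finset (Sym2 α)) : Prop :=
  ∀ a b c d, s(a, b) ∈ E → s(c, d) ∈ E → ¬ Cr k a b c d

abbrev Adj (E : Finset (Sym2 α)) (a b : α) : Prop := s(a, b) ∈ E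

abbrev Rch (E : Finset (Sym2 α)) : α → α → Prop := Relation.ReflTransGen (Adj E)

structure CT (k : α → ℕ) (S : Finset α) (E : Finset (Sym2 α)) : Prop where
  mem : ∀ a b, s(a, b) ∈ E → a ≠ b ∧ a ∈ S ∧ b ∈ S
  nc : NC k E
  card : E.card + 1 = S.card
  conn : ∀ p ∈ S, ∀ q ∈ S, Rch E p q

def CStep (k : α → ℕ) (S : Finset α) (E₁ E₂ : Finset (Sym2 α)) : Prop :=
  CT k S E₁ ∧ CT k S E₂ ∧ NC k (E₁ ∪ E₂) ∧ ∃ π : Sym2 α → Sym2 α,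
    Set.BijOn π {e | e ∈ E₁ ∧ e ∉ E₂} {e | e ∈ E₂ ∧ e ∉ E₁} ∧
    ∀ e, e ∈ E₁ → e ∉ E₂ → ∃ p q r : α, e = s(p, q) ∧ π e = s(p, r) ∧
      s(q, r) ∈ E₁ ∧ s(q, r) ∈ E₂

theorem Rch.symm {E : Finset (Sym2 α)} {a b : α} (h : Rch E a b) : Rch E b a := by
  induction h with
  | refl => exact Relation.ReflTransGen.refl
  | tail h1 h2 ih => exact Relation.ReflTransGen.head (by rw [Adj, Sym2.eq_swap]; exact h2) ih

theorem Rch.mono {E F : Finset (Sym2 α)} (h : E ⊆ F) {a b : α} (hab : Rch E a b) : Rch F a b :=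
  Relation.ReflTransGen.mono (r := Adj E) (p := Adj F) (fun _ _ hx => h hx) _ _ hab

/-- along a chain, a predicate must change at some edge -/
theorem Rch.change {E : Finset (Sym2 α)} {a b : α} (h : Rch E a b) (P : α → Prop)
    (ha : P a) (hb : ¬ P b) : ∃ p q, Rch E a p ∧ s(p, q) ∈ E ∧ P p ∧ ¬ P q := by
  induction h with
  | refl => exact absurd ha hb
  | tail h1 h2 ih =>
    rename_i c d
    by_cases hc : P c
    · exact ⟨c, d, h1, h2, hc, hb⟩
    · exact ih hc

/-- components -/
theorem exists_reps (S : Finset α) (E : Finset (Sym2 α)) :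
    ∃ R ⊆ S, S.card ≤ R.card + E.card ∧ ∀ r ∈ R, ∀ r' ∈ R, Rch E r r' → r = r' := by
  induction E using Finset.induction_on with
  | empty =>
    refine ⟨S, subset_rfl, by simp, ?_⟩
    intro r _ r' _ h
    rcases Relation.ReflTransGen.cases_head h with h | ⟨c, hc, _⟩
    · exact h
    · simp [Adj] at hc
  | insert e E he ih =>
    obtain ⟨R, hRS, hc, hR⟩ := ih
    induction e using Sym2.ind with
    | _ a b =>
    -- reach in insert
    have key : ∀ x y, Rch (insert s(a, b) E) x y → Rch E x y ∨
        (Rch E x a ∨ Rch E x b) ∧ (Rch E y a ∨ Rch E y b) := by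
      intro x y h
      induction h with
      | refl => left; exact Relation.ReflTransGen.refl
      | tail h1 h2 ih =>
        rename_i c d
        simp only [Adj, Finset.mem_insert, Sym2.eq_iff] at h2
        rcases h2 with (⟨rfl, rfl⟩ | ⟨rfl, rfl⟩) | h2
        · rcases ih with ih | ih
          · exact Or.inr ⟨Or.inl ih, Or.inr Relation.ReflTransGen.refl⟩
          · exact Or.inr ⟨ih.1, Or.inr Relation.ReflTransGen.refl⟩
        · rcases ih with ih | ih
          · exact Or.inr ⟨Or.inr ih, Or.inl Relation.ReflTransGen.refl⟩
          · exact Or.inr ⟨ih.1, Or.inl Relation.ReflTransGen.refl⟩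
        · have hdc : Rch E d c := Rch.symm (Relation.ReflTransGen.single h2)
          rcases ih with ih | ih
          · exact Or.inl (ih.tail h2)
          · refine Or.inr ⟨ih.1, ?_⟩
            rcases ih.2 with h | h
            · exact Or.inl (hdc.trans h)
            · exact Or.inr (hdc.trans h)
    by_cases hex : ∃ r ∈ R, Rch E r a
    · obtain ⟨r, hr, hra⟩ := hex
      refine ⟨R.erase r, (Finset.erase_subset _ _).trans hRS, ?_, ?_⟩
      · rw [Finset.card_insert_of_notMem he]
        have := Finset.card_erase_add_one hr
        omega
      · intro x hx y hy hxy
        have hx' := Finset.mem_of_mem_erase hx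
        have hy' := Finset.mem_of_mem_erase hy
        have nx : ¬ Rch E x a := fun h => (Finset.ne_of_mem_erase hx) (hR _ hx' _ hr (h.trans hra.symm))
        have ny : ¬ Rch E y a := fun h => (Finset.ne_of_mem_erase hy) (hR _ hy' _ hr (h.trans hra.symm))
        rcases key _ _ hxy with h | ⟨h1, h2⟩
        · exact hR _ hx' _ hy' h
        · have h1 := h1.resolve_left nx
          have h2 := h2.resolve_left ny
          exact hR _ hx' _ hy' (h1.trans h2.symm)
    · push Not at hex
      refine ⟨R, hRS, ?_, ?_⟩
      · rw [Finset.card_insert_of_notMem he]; omega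
      · intro x hx y hy hxy
        rcases key _ _ hxy with h | ⟨h1, h2⟩
        · exact hR _ hx _ hy h
        · have h1 := h1.resolve_left (hex _ hx)
          have h2 := h2.resolve_left (hex _ hy)
          exact hR _ hx _ hy (h1.trans h2.symm)

theorem card_le_of_conn {S : Finset α} {E : Finset (Sym2 α)}
    (h : ∀ p ∈ S, ∀ q ∈ S, Rch E p q) : S.card ≤ E.card + 1 := by
  obtain ⟨R, hRS, hc, hR⟩ := exists_reps S E
  have : R.card ≤ 1 := Finset.card_le_one.2 fun a ha b hb =>
    hR a ha b hb (h _ (hRS ha) _ (hRS hb))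
  omega

/-- every edge of a tree is a bridge -/
theorem CT.bridge {k : α → ℕ} {S : Finset α} {E : Finset (Sym2 α)} (hT : CT k S E) {a b : α}
    (hab : s(a, b) ∈ E) : ¬ Rch (E.erase s(a, b)) a b := by
  intro h
  have key : ∀ x y, Rch E x y → Rch (E.erase s(a, b)) x y := by
    intro x y hxy
    induction hxy with
    | refl => exact Relation.ReflTransGen.refl
    | tail h1 h2 ih =>
      rename_i c d
      by_cases he : s(c, d) = s(a, b)
      · rcases Sym2.eq_iff.1 he with ⟨rfl, rfl⟩ | ⟨rfl, rfl⟩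
        · exact ih.trans h
        · exact ih.trans h.symm
      · exact ih.tail (Finset.mem_erase.2 ⟨he, h2⟩)
  have h1 := card_le_of_conn (S := S) (fun p hp q hq => key p q (hT.conn p hp q hq))
  have h2 := Finset.card_erase_add_one hab
  have := hT.card
  omega

theorem step_of_map {k : α → ℕ} {S : Finset α} {E : Finset (Sym2 α)} (hT : CT k S E)
    (φ : Sym2 α → Sym2 α)
    (hφ : ∀ e ∈ E, φ e = e ∨ ∃ p q r, e = s(p, q) ∧ φ e = s(p, r) ∧ p ≠ r ∧ s(q, r) ∈ E ∧
      φ s(q, r) = s(q, r))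
    (hfix : ∀ e ∈ E, φ e ∈ E → φ (φ e) = φ e)
    (hnc : NC k (E ∪ E.image φ)) : CStep k S E (E.image φ) := by
  have hconn : ∀ p ∈ S, ∀ q ∈ S, Rch (E.image φ) p q := by
    intro p hp q hq
    have := hT.conn p hp q hq
    clear hp hq
    induction this with
    | refl => exact Relation.ReflTransGen.refl
    | tail h1 h2 ih =>
      rename_i c d
      refine ih.trans ?_
      rcases hφ _ h2 with h | ⟨x, y, z, h3, h4, h5, h6, h7⟩
      · exact Relation.ReflTransGen.single (Finset.mem_image.2 ⟨_, h2, h⟩)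
      · have e1 : s(x, z) ∈ E.image φ := Finset.mem_image.2 ⟨_, h2, h4⟩
        have e2 : s(y, z) ∈ E.image φ := Finset.mem_image.2 ⟨_, h6, h7⟩
        have hxy : Rch (E.image φ) x y :=
          Relation.ReflTransGen.trans (Relation.ReflTransGen.single e1)
            (Rch.symm (Relation.ReflTransGen.single e2))
        rcases Sym2.eq_iff.1 h3 with ⟨rfl, rfl⟩ | ⟨rfl, rfl⟩
        · exact hxy
        · exact hxy.symm
  have hcard : (E.image φ).card = E.card := by
    apply le_antisymm Finset.card_image_le
    have := card_le_of_conn hconn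
    have := hT.card
    omega
  have hinj : Set.InjOn φ E := Finset.card_image_iff.1 hcard
  have hmem : ∀ a b, s(a, b) ∈ E.image φ → a ≠ b ∧ a ∈ S ∧ b ∈ S := by
    intro a b hab
    obtain ⟨e, he, hab⟩ := Finset.mem_image.1 hab
    rcases hφ _ he with h | ⟨x, y, z, h3, h4, h5, h6, h7⟩
    · exact hT.mem _ _ (by rw [← hab, h]; exact he)
    · rw [h4] at hab
      have m1 := hT.mem x y (h3 ▸ he)
      have m2 := hT.mem _ _ h6
      rcases Sym2.eq_iff.1 hab with ⟨rfl, rfl⟩ | ⟨rfl, rfl⟩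
      · exact ⟨h5, m1.2.1, m2.2.2⟩
      · exact ⟨h5.symm, m2.2.2, m1.2.1⟩
  have hT2 : CT k S (E.image φ) := by
    refine ⟨hmem, ?_, by rw [hcard]; exact hT.card, hconn⟩
    intro a b c d h1 h2
    exact hnc a b c d (Finset.mem_union_right _ h1) (Finset.mem_union_right _ h2)
  have hmv : ∀ e ∈ E, φ e ∈ E → φ e = e := fun e he h => hinj h he (hfix e he h)
  refine ⟨hT, hT2, hnc, φ, ⟨?_, ?_, ?_⟩, ?_⟩
  · rintro e ⟨h1, h2⟩
    refine ⟨Finset.mem_image_of_mem _ h1, fun h => h2 ?_⟩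
    exact Finset.mem_image.2 ⟨e, h1, hmv e h1 h⟩
  · exact hinj.mono fun e he => he.1
  · rintro f ⟨h1, h2⟩
    obtain ⟨e, he, rfl⟩ := Finset.mem_image.1 h1
    refine ⟨e, ⟨he, fun h => ?_⟩, rfl⟩
    obtain ⟨g, hg, hge⟩ := Finset.mem_image.1 h
    have := hfix g hg (hge ▸ he)
    rw [hge] at this
    exact h2 (by rw [this]; exact he)
  · intro e he hne
    rcases hφ e he with h | ⟨x, y, z, h3, h4, h5, h6, h7⟩
    · exact absurd (Finset.mem_image.2 ⟨e, he, h⟩) hne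
    · exact ⟨x, y, z, h3, h4, h6, Finset.mem_image.2 ⟨_, h6, h7⟩⟩

theorem NC.mono {k : α → ℕ} {E F : Finset (Sym2 α)} (h : E ⊆ F) (hF : NC k F) : NC k E :=
  fun a b c d h1 h2 => hF a b c d (h h1) (h h2)

theorem CStep.symm [Nonempty α] {k : α → ℕ} {S : Finset α} {E F : Finset (Sym2 α)} (h : CStep k S E F) :
    CStep k S F E := by
  obtain ⟨h1, h2, h3, π, hb, hπ⟩ := h
  have : Nonempty (Sym2 α) := Nonempty.map (fun a => s(a, a)) inferInstance
  refine ⟨h2, h1, by rwa [Finset.union_comm], Function.invFunOn π {e | e ∈ E ∧ e ∉ F}, ?_, ?_⟩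
  · exact (Set.bijOn_comm hb.invOn_invFunOn).2 hb
  · intro f hf hfE
    obtain ⟨e, he, rfl⟩ := hb.surjOn ⟨hf, hfE⟩
    obtain ⟨p, q, r, e1, e2, e3, e4⟩ := hπ e he.1 he.2
    refine ⟨p, r, q, e2, ?_, by rwa [Sym2.eq_swap], by rwa [Sym2.eq_swap]⟩
    rw [hb.injOn.leftInvOn_invFunOn he, e1]

end comb


section comb2
variable {α : Type*}

def ears (A : Finset α) (w : α → α) : Finset (Sym2 α) := A.image (fun v => s(v, w v))

theorem mem_ears {A : Finset α} {w : α → α} {e : Sym2 α} :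
    e ∈ ears A w ↔ ∃ v ∈ A, s(v, w v) = e := by simp [ears]

theorem ct_ears {k : α → ℕ} {S A : Finset α} {T : Finset (Sym2 α)} {w : α → α}
    (hT : CT k S T) (hd : Disjoint S A) (hw : ∀ v ∈ A, w v ∈ S) (hnc : NC k (T ∪ ears A w)) :
    CT k (S ∪ A) (T ∪ ears A w) := by
  have hne : ∀ v ∈ A, v ∉ S := fun v hv hs => Finset.disjoint_left.1 hd hs hv
  refine ⟨?_, hnc, ?_, ?_⟩
  · intro a b hab
    rcases Finset.mem_union.1 hab with h | h
    · have := hT.mem _ _ h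
      exact ⟨this.1, Finset.mem_union_left _ this.2.1, Finset.mem_union_left _ this.2.2⟩
    · obtain ⟨v, hv, hvab⟩ := mem_ears.1 h
      have h1 := hw v hv
      have h2 := hne v hv
      have h3 : v ≠ w v := fun h => h2 (h ▸ h1)
      rcases Sym2.eq_iff.1 hvab with ⟨rfl, rfl⟩ | ⟨rfl, rfl⟩
      · exact ⟨h3, Finset.mem_union_right _ hv, Finset.mem_union_left _ h1⟩
      · exact ⟨h3.symm, Finset.mem_union_left _ h1, Finset.mem_union_right _ hv⟩
  · have hinj : (ears A w).card = A.card := by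
      apply Finset.card_image_of_injOn
      intro v hv u hu huv
      rcases Sym2.eq_iff.1 huv with h | h
      · exact h.1
      · exact absurd (hw u hu) (h.1 ▸ hne v hv)
    have hdis : Disjoint T (ears A w) := by
      rw [Finset.disjoint_left]
      intro e he he'
      obtain ⟨v, hv, rfl⟩ := mem_ears.1 he'
      exact hne v hv (hT.mem _ _ he).2.1
    rw [Finset.card_union_of_disjoint hdis, Finset.card_union_of_disjoint hd, hinj, ← hT.card]
    omega
  · have key : ∀ p ∈ S ∪ A, ∃ q ∈ S, Rch (T ∪ ears A w) p q := by
      intro p hp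
      rcases Finset.mem_union.1 hp with h | h
      · exact ⟨p, h, Relation.ReflTransGen.refl⟩
      · exact ⟨w p, hw p h, Relation.ReflTransGen.single
          (Finset.mem_union_right _ (mem_ears.2 ⟨p, h, rfl⟩))⟩
    intro p hp q hq
    obtain ⟨p', hp', h1⟩ := key p hp
    obtain ⟨q', hq', h2⟩ := key q hq
    exact h1.trans (((hT.conn p' hp' q' hq').mono Finset.subset_union_left).trans h2.symm)

theorem Cr.symm {k : α → ℕ} {a b c d : α} (h : Cr k a b c d) : Cr k c d a b := by
  unfold Cr at *; omega

theorem Cr.flip {k : α → ℕ} {a b c d : α} (h : Cr k a b c d) : Cr k b a c d := by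
  unfold Cr at *; omega

theorem Cr.flip2 {k : α → ℕ} {a b c d : α} (h : Cr k a b c d) : Cr k a b d c := by
  unfold Cr at *; omega

theorem not_cr_self {k : α → ℕ} {a b c : α} : ¬ Cr k a b a c := by
  unfold Cr; omega

/-- Criterion for noncrossing of a tree plus a set of extra edges. -/
theorem nc_union {k : α → ℕ} {T R : Finset (Sym2 α)} (h1 : NC k T) (h2 : NC k R)
    (h3 : ∀ a b c d, s(a, b) ∈ T → s(c, d) ∈ R → ¬ Cr k a b c d) : NC k (T ∪ R) := by
  intro a b c d hab hcd h
  rcases Finset.mem_union.1 hab with hab | hab <;> rcases Finset.mem_union.1 hcd with hcd | hcd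
  · exact h1 _ _ _ _ hab hcd h
  · exact h3 _ _ _ _ hab hcd h
  · exact h3 _ _ _ _ hcd hab h.symm
  · exact h2 _ _ _ _ hab hcd h

/-- pairs uncrossed in S -/
def Hull (k : α → ℕ) (S : Finset α) (v w : α) : Prop := ∀ x ∈ S, ∀ y ∈ S, ¬ Cr k x y v w

theorem nc_hull {k : α → ℕ} {S A : Finset α} {T : Finset (Sym2 α)} {w : α → α}
    (hS : ∀ a b, s(a, b) ∈ T → a ∈ S ∧ b ∈ S) (hA : ∀ v ∈ A, v ∈ S ∧ w v ∈ S)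
    (hT : NC k T) (hh : ∀ v ∈ A, Hull k S v (w v)) : NC k (T ∪ ears A w) := by
  have key : ∀ a b c d, a ∈ S → b ∈ S → s(c, d) ∈ ears A w → ¬ Cr k a b c d := by
    intro a b c d ha hb hcd h
    obtain ⟨v, hv, hvw⟩ := mem_ears.1 hcd
    rcases Sym2.eq_iff.1 hvw with ⟨rfl, rfl⟩ | ⟨rfl, rfl⟩
    · exact hh v hv _ ha _ hb h
    · exact hh v hv _ ha _ hb h.flip2
  refine nc_union hT ?_ ?_
  · intro a b c d hab
    obtain ⟨v, hv, hvw⟩ := mem_ears.1 hab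
    have := hA v hv
    rcases Sym2.eq_iff.1 hvw with ⟨rfl, rfl⟩ | ⟨rfl, rfl⟩
    · exact key _ _ _ _ this.1 this.2
    · exact key _ _ _ _ this.2 this.1
  · intro a b c d hab
    exact key _ _ _ _ (hS _ _ hab).1 (hS _ _ hab).2

theorem lift_step {k : α → ℕ} {S A : Finset α} {T T' : Finset (Sym2 α)} {w : α → α}
    (hd : Disjoint S A) (hw : ∀ v ∈ A, w v ∈ S) (hh : ∀ v ∈ A, Hull k (S ∪ A) v (w v))
    (h : CStep k S T T') : CStep k (S ∪ A) (T ∪ ears A w) (T' ∪ ears A w) := by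
  obtain ⟨h1, h2, h3, π, hb, hπ⟩ := h
  have hA : ∀ v ∈ A, v ∈ S ∪ A ∧ w v ∈ S ∪ A := fun v hv =>
    ⟨Finset.mem_union_right _ hv, Finset.mem_union_left _ (hw v hv)⟩
  have hU : ∀ a b, s(a, b) ∈ T ∪ T' → a ∈ S ∪ A ∧ b ∈ S ∪ A := by
    intro a b hab
    rcases Finset.mem_union.1 hab with h | h
    · exact ⟨Finset.mem_union_left _ (h1.mem _ _ h).2.1, Finset.mem_union_left _ (h1.mem _ _ h).2.2⟩
    · exact ⟨Finset.mem_union_left _ (h2.mem _ _ h).2.1, Finset.mem_union_left _ (h2.mem _ _ h).2.2⟩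
  have hnc : NC k ((T ∪ T') ∪ ears A w) := nc_hull hU hA h3 hh
  have nd : ∀ e ∈ ears A w, e ∉ T ∧ e ∉ T' := by
    intro e he
    obtain ⟨v, hv, rfl⟩ := mem_ears.1 he
    exact ⟨fun h => Finset.disjoint_left.1 hd (h1.mem _ _ h).2.1 hv,
      fun h => Finset.disjoint_left.1 hd (h2.mem _ _ h).2.1 hv⟩
  refine ⟨ct_ears h1 hd hw (hnc.mono ?_), ct_ears h2 hd hw (hnc.mono ?_), hnc.mono ?_, π, ?_, ?_⟩
  · intro e; simp only [Finset.mem_union]; tauto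
  · intro e; simp only [Finset.mem_union]; tauto
  · intro e; simp only [Finset.mem_union]; tauto
  · have e1 : {e | e ∈ T ∪ ears A w ∧ e ∉ T' ∪ ears A w} = {e | e ∈ T ∧ e ∉ T'} := by
      ext e; have := nd e; simp only [Finset.mem_union, Set.mem_ofPred_eq]; tauto
    have e2 : {e | e ∈ T' ∪ ears A w ∧ e ∉ T ∪ ears A w} = {e | e ∈ T' ∧ e ∉ T} := by
      ext e; have := nd e; simp only [Finset.mem_union, Set.mem_ofPred_eq]; tauto
    rw [e1, e2]; exact hb
  · intro e he hne
    simp only [Finset.mem_union, not_or] at he hne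
    obtain ⟨p, q, r, a1, a2, a3, a4⟩ := hπ e (he.resolve_right hne.2) hne.1
    exact ⟨p, q, r, a1, a2, Finset.mem_union_left _ a3, Finset.mem_union_left _ a4⟩

theorem move_step {k : α → ℕ} {S A : Finset α} {T : Finset (Sym2 α)} {w w' : α → α}
    (hT : CT k S T) (hd : Disjoint S A) (hw : ∀ v ∈ A, w v ∈ S) (hw' : ∀ v ∈ A, w' v ∈ S)
    (hs : ∀ v ∈ A, w' v = w v ∨ s(w v, w' v) ∈ T)
    (hnc : NC k (T ∪ (ears A w ∪ ears A w'))) :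
    CStep k (S ∪ A) (T ∪ ears A w) (T ∪ ears A w') := by
  have hne : ∀ v ∈ A, v ∉ S := fun v hv hs => Finset.disjoint_left.1 hd hs hv
  have hC : CT k (S ∪ A) (T ∪ ears A w) := ct_ears hT hd hw (hnc.mono (by
    intro e; simp only [Finset.mem_union]; tauto))
  let φ : Sym2 α → Sym2 α := fun e => if h : ∃ v ∈ A, s(v, w v) = e then
    s(h.choose, w' h.choose) else e
  have φT : ∀ e ∈ T, φ e = e := by
    intro e he
    have : ¬ ∃ v ∈ A, s(v, w v) = e := by
      rintro ⟨v, hv, rfl⟩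
      exact hne v hv (hT.mem _ _ he).2.1
    simp only [φ, dif_neg this]
  have φA : ∀ v ∈ A, φ s(v, w v) = s(v, w' v) := by
    intro v hv
    have h : ∃ u ∈ A, s(u, w u) = s(v, w v) := ⟨v, hv, rfl⟩
    simp only [φ, dif_pos h]
    have h1 := h.choose_spec
    have : h.choose = v := by
      rcases Sym2.eq_iff.1 h1.2 with h2 | h2
      · exact h2.1
      · exact absurd (hw v hv) (h2.1 ▸ hne _ h1.1)
    rw [this]
  have him : (T ∪ ears A w).image φ = T ∪ ears A w' := by
    ext e
    simp only [Finset.mem_image, Finset.mem_union, mem_ears]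
    constructor
    · rintro ⟨f, hf | ⟨v, hv, rfl⟩, rfl⟩
      · left; rw [φT f hf]; exact hf
      · right; exact ⟨v, hv, (φA v hv).symm⟩
    · rintro (h | ⟨v, hv, rfl⟩)
      · exact ⟨e, Or.inl h, φT e h⟩
      · exact ⟨_, Or.inr ⟨v, hv, rfl⟩, φA v hv⟩
  rw [← him]
  refine step_of_map hC φ ?_ ?_ ?_
  · intro e he
    rcases Finset.mem_union.1 he with he | he
    · exact Or.inl (φT e he)
    · obtain ⟨v, hv, rfl⟩ := mem_ears.1 he
      rcases hs v hv with h | h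
      · left; rw [φA v hv, h]
      · right
        exact ⟨v, w v, w' v, rfl, φA v hv, fun h => hne v hv (h ▸ hw' v hv),
          Finset.mem_union_left _ h, φT _ h⟩
  · intro e he hφ
    rcases Finset.mem_union.1 he with he | he
    · rw [φT e he, φT e he]
    · obtain ⟨v, hv, rfl⟩ := mem_ears.1 he
      rw [φA v hv] at hφ ⊢
      rcases Finset.mem_union.1 hφ with h | h
      · exact absurd (hT.mem _ _ h).2.1 (hne v hv)
      · obtain ⟨u, hu, h⟩ := mem_ears.1 h
        rcases Sym2.eq_iff.1 h with h | h
        · obtain ⟨rfl, h⟩ := h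
          rw [← h, φA u hu, h]
        · exact absurd (hw u hu) (h.2 ▸ hne v hv)
  · rw [him]
    exact hnc.mono (by intro e; simp only [Finset.mem_union]; tauto)

/-- deleting leaves -/
theorem ct_delete {k : α → ℕ} {S A : Finset α} {E : Finset (Sym2 α)} {w : α → α}
    (hT : CT k S E) (hA : A ⊆ S)
    (hl : ∀ v ∈ A, s(v, w v) ∈ E ∧ w v ∉ A ∧ ∀ x, s(v, x) ∈ E → x = w v) :
    CT k (S \ A) (E \ ears A w) ∧ (E \ ears A w) ∪ ears A w = E := by
  have hsub : ears A w ⊆ E := by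
    intro e he
    obtain ⟨v, hv, rfl⟩ := mem_ears.1 he
    exact (hl v hv).1
  have hinj : (ears A w).card = A.card := by
    apply Finset.card_image_of_injOn
    intro v hv u hu huv
    rcases Sym2.eq_iff.1 huv with h | h
    · exact h.1
    · exact absurd hv (h.1 ▸ (hl u hu).2.1)
  have hAE : ∀ a b, s(a, b) ∈ E → a ∈ A → s(a, b) ∈ ears A w := by
    intro a b hab ha
    rw [(hl a ha).2.2 b hab]
    exact mem_ears.2 ⟨a, ha, rfl⟩
  refine ⟨⟨?_, hT.nc.mono Finset.sdiff_subset, ?_, ?_⟩, Finset.sdiff_union_of_subset hsub⟩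
  · intro a b hab
    obtain ⟨h1, h2⟩ := Finset.mem_sdiff.1 hab
    have := hT.mem a b h1
    refine ⟨this.1, Finset.mem_sdiff.2 ⟨this.2.1, fun h => h2 (hAE a b h1 h)⟩,
      Finset.mem_sdiff.2 ⟨this.2.2, fun h => h2 ?_⟩⟩
    rw [Sym2.eq_swap] at h1 ⊢
    exact hAE b a h1 h
  · rw [Finset.card_sdiff_of_subset hsub, Finset.card_sdiff_of_subset hA, hinj]
    have := hT.card
    have := Finset.card_le_card hsub
    omega
  · let ρ : α → α := fun v => if v ∈ A then w v else v
    have ρ1 : ∀ v ∈ A, ρ v = w v := fun v hv => if_pos hv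
    have ρ2 : ∀ v, v ∉ A → ρ v = v := fun v hv => if_neg hv
    have key : ∀ x y, Rch E x y → Rch (E \ ears A w) (ρ x) (ρ y) := by
      intro x y h
      induction h with
      | refl => exact Relation.ReflTransGen.refl
      | tail h1 h2 ih =>
        rename_i c d
        refine ih.trans ?_
        by_cases hc : c ∈ A
        · have := (hl c hc).2.2 d h2
          subst this
          rw [ρ1 c hc, ρ2 _ (hl c hc).2.1]
        · by_cases hd : d ∈ A
          · have := (hl d hd).2.2 c (by rw [Sym2.eq_swap]; exact h2)
            subst this
            rw [ρ1 d hd, ρ2 _ (hl d hd).2.1]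
          · rw [ρ2 c hc, ρ2 d hd]
            refine Relation.ReflTransGen.single (Finset.mem_sdiff.2 ⟨h2, fun h => ?_⟩)
            obtain ⟨v, hv, h⟩ := mem_ears.1 h
            rcases Sym2.eq_iff.1 h with h | h
            · exact hc (h.1 ▸ hv)
            · exact hd (h.1 ▸ hv)
    intro p hp q hq
    obtain ⟨hp, hp'⟩ := Finset.mem_sdiff.1 hp
    obtain ⟨hq, hq'⟩ := Finset.mem_sdiff.1 hq
    have := key p q (hT.conn p hp q hq)
    rwa [ρ2 p hp', ρ2 q hq'] at this

end comb2


section comb3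
variable {α : Type*}

structure SP (E : Finset (Sym2 α)) (v h : α) (d : ℕ) (u : ℕ → α) : Prop where
  u0 : u 0 = v
  ud : u d = h
  adj : ∀ i < d, s(u i, u (i + 1)) ∈ E
  inj : ∀ i j, i < j → j ≤ d → u i ≠ u j
  chord : ∀ i j, i < j → j ≤ d → s(u i, u j) ∈ E → j = i + 1

theorem exists_sp {E : Finset (Sym2 α)} {v h : α} (hr : Rch E v h) : ∃ d u, SP E v h d u := by
  have hex : ∃ d, ∃ u : ℕ → α, u 0 = v ∧ u d = h ∧ ∀ i < d, s(u i, u (i + 1)) ∈ E := by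
    induction hr with
    | refl => exact ⟨0, fun _ => v, rfl, rfl, by simp⟩
    | tail h1 h2 ih =>
      rename_i c d
      obtain ⟨m, u, h3, h4, h5⟩ := ih
      refine ⟨m + 1, fun i => if i ≤ m then u i else d, by simp [h3], by simp, ?_⟩
      intro i hi
      by_cases him : i < m
      · have : i + 1 ≤ m := him
        simp only [him.le, this, if_true]; exact h5 i him
      · have : i = m := by omega
        subst this
        simpa [h4] using h2
  obtain ⟨u, h0, h1, h2⟩ := Nat.find_spec hex
  set d := Nat.find hex with hd
  have hmin : ∀ m, m < d → ¬ ∃ u : ℕ → α, u 0 = v ∧ u m = h ∧ ∀ i < m, s(u i, u (i + 1)) ∈ E :=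
    fun m hm => Nat.find_min hex hm
  refine ⟨d, u, h0, h1, h2, ?_, ?_⟩
  · intro i j hij hjd he
    refine hmin (d - (j - i)) (by omega) ⟨fun t => if t ≤ i then u t else u (t + (j - i)), ?_, ?_, ?_⟩
    · simp [h0]
    · by_cases h : d - (j - i) ≤ i
      · have e1 : d - (j - i) = i := by omega
        have e2 : j = d := by omega
        simp only [e1, le_refl, if_true]; rw [he, e2, h1]
      · simp only [h, if_false]; rw [← h1]; congr 1; omega
    · intro t ht
      by_cases h3 : t < i
      · have : t + 1 ≤ i := h3
        simp only [h3.le, this, if_true]; exact h2 t (by omega)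
      · by_cases h4 : t = i
        · subst h4
          have : ¬ t + 1 ≤ t := by omega
          simp only [le_refl, this, if_true, if_false]
          rw [he]
          have := h2 j (by omega)
          convert this using 3; omega
        · have h5 : ¬ t ≤ i := by omega
          have h6 : ¬ t + 1 ≤ i := by omega
          simp only [h5, h6, if_false]
          have := h2 (t + (j - i)) (by omega)
          convert this using 3; omega
  · intro i j hij hjd he
    by_contra hne
    refine hmin (d - (j - i - 1)) (by omega)
      ⟨fun t => if t ≤ i then u t else u (t + (j - i - 1)), ?_, ?_, ?_⟩
    · simp [h0]
    · have h : ¬ d - (j - i - 1) ≤ i := by omega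
      simp only [h, if_false]; rw [← h1]; congr 1; omega
    · intro t ht
      by_cases h3 : t < i
      · have : t + 1 ≤ i := h3
        simp only [h3.le, this, if_true]; exact h2 t (by omega)
      · by_cases h4 : t = i
        · subst h4
          have : ¬ t + 1 ≤ t := by omega
          simp only [le_refl, this, if_true, if_false]
          convert he using 3; omega
        · have h5 : ¬ t ≤ i := by omega
          have h6 : ¬ t + 1 ≤ i := by omega
          simp only [h5, h6, if_false]
          have := h2 (t + (j - i - 1)) (by omega)
          convert this using 3; omega

def sepSet (E : Finset (Sym2 α)) (v h : α) : Finset (Sym2 α) :=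
  E.filter (fun e => ¬ Rch (E.erase e) v h)

theorem rch_of_seq {E : Finset (Sym2 α)} {u : ℕ → α} {i j : ℕ} (hij : i ≤ j)
    (h : ∀ l, i ≤ l → l < j → s(u l, u (l + 1)) ∈ E) : Rch E (u i) (u j) := by
  induction j, hij using Nat.le_induction with
  | base => exact Relation.ReflTransGen.refl
  | succ j hj ih =>
    exact (ih fun l h1 h2 => h l h1 (by omega)).tail (h j hj (by omega))

theorem SP.le_sep {k : α → ℕ} {S : Finset α} {E : Finset (Sym2 α)} (hT : CT k S E) {v h : α}
    {d : ℕ} {u : ℕ → α} (hu : SP E v h d u) : d ≤ (sepSet E v h).card := by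
  have hne : ∀ i < d, ∀ l < d, s(u l, u (l + 1)) = s(u i, u (i + 1)) → l = i := by
    intro i hi l hl he
    by_contra hil
    rcases Sym2.eq_iff.1 he with h | h
    · rcases lt_or_gt_of_ne hil with h' | h'
      · exact hu.inj l i h' (by omega) h.1
      · exact hu.inj i l h' (by omega) h.1.symm
    · rcases lt_or_gt_of_ne hil with h' | h'
      · exact hu.inj l (i + 1) (by omega) (by omega) h.1
      · exact hu.inj i (l + 1) (by omega) (by omega) h.2.symm
  have : (Finset.range d).card ≤ (sepSet E v h).card := by
    apply Finset.card_le_card_of_injOn (fun i => s(u i, u (i + 1)))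
    · intro i hi
      have hi : i < d := by simpa using hi
      have he := hu.adj i hi
      simp only [sepSet, Finset.coe_filter, Set.mem_ofPred_eq]
      refine ⟨he, fun hr => hT.bridge he ?_⟩
      have h1 : Rch (E.erase s(u i, u (i + 1))) (u 0) (u i) := by
        apply rch_of_seq (Nat.zero_le _)
        intro l _ hl
        refine Finset.mem_erase.2 ⟨fun h => ?_, hu.adj l (by omega)⟩
        have := hne i hi l (by omega) h; omega
      have h2 : Rch (E.erase s(u i, u (i + 1))) (u (i + 1)) (u d) := by
        apply rch_of_seq (by omega)
        intro l hl hl'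
        refine Finset.mem_erase.2 ⟨fun h => ?_, hu.adj l (by omega)⟩
        have := hne i hi l (by omega) h; omega
      rw [hu.u0] at h1
      rw [hu.ud] at h2
      exact h1.symm.trans (hr.trans h2.symm)
    · intro i hi j hj hij
      exact hne j (by simpa using hj) i (by simpa using hi) hij
  simpa using this

theorem side_seq {k : α → ℕ} {E : Finset (Sym2 α)} {x y v : α}
    (hE : ∀ a b, s(a, b) ∈ E → ¬ Cr k x y a b) {u : ℕ → α} {i j : ℕ} (hij : i ≤ j)
    (h : ∀ l, i ≤ l → l < j → s(u l, u (l + 1)) ∈ E)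
    (hk : ∀ l, i ≤ l → l ≤ j → k (u l) ≠ k x ∧ k (u l) ≠ k y) :
    Cr k x y v (u i) ↔ Cr k x y v (u j) := by
  induction j, hij using Nat.le_induction with
  | base => rfl
  | succ j hj ih =>
    rw [ih (fun l h1 h2 => h l h1 (by omega)) (fun l h1 h2 => hk l h1 (by omega))]
    have h1 := hE _ _ (h j hj (by omega))
    have h2 := hk j hj (by omega)
    have h3 := hk (j + 1) (by omega) (by omega)
    unfold Cr at *
    omega

/-- the path lemma -/
theorem SP.cross {k : α → ℕ} {S : Finset α} (hk : Set.InjOn k S) {E : Finset (Sym2 α)}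
    (hE : ∀ a b, s(a, b) ∈ E → a ∈ S ∧ b ∈ S) {v h : α} (hvS : v ∈ S) {d : ℕ} {u : ℕ → α}
    (hu : SP E v h d u) {x y : α} (hx : x ∈ S) (hy : y ∈ S)
    (hxy : ∀ a b, s(a, b) ∈ E → ¬ Cr k x y a b) (hh : ¬ Cr k x y v h) {t : ℕ} (ht : t ≤ d)
    (hc : Cr k x y v (u t)) :
    ∃ i j, i < t ∧ t < j ∧ j ≤ d ∧ (u i = x ∨ u i = y) ∧ (u j = x ∨ u j = y) := by
  have hS : ∀ l ≤ d, u l ∈ S := by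
    intro l hl
    rcases Nat.eq_zero_or_pos l with rfl | hl'
    · rw [hu.u0]; exact hvS
    · have := hE _ _ (hu.adj (l - 1) (by omega))
      rw [Nat.sub_add_cancel hl'] at this
      exact this.2
  have hne : ∀ l ≤ d, ¬ (u l = x ∨ u l = y) → k (u l) ≠ k x ∧ k (u l) ≠ k y := by
    intro l hl h
    push Not at h
    exact ⟨fun h' => h.1 (hk (hS l hl) hx h'), fun h' => h.2 (hk (hS l hl) hy h')⟩
  have hv : k v ≠ k x ∧ k v ≠ k y := by unfold Cr at hc; omega
  have hut : k (u t) ≠ k x ∧ k (u t) ≠ k y := by unfold Cr at hc; omega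
  have hut' : ¬ (u t = x ∨ u t = y) := by
    rintro (h | h) <;> rw [h] at hut <;> simp at hut
  have h1 : ∃ i, i < t ∧ (u i = x ∨ u i = y) := by
    by_contra hcon
    push Not at hcon
    have := side_seq (v := v) hxy (Nat.zero_le t) (fun l _ hl => hu.adj l (by omega)) (fun l _ hl => by
      rcases Nat.lt_or_ge l t with h | h
      · exact hne l (by omega) (by have := hcon l h; tauto)
      · have : l = t := by omega
        rw [this]; exact hut)
    rw [hu.u0] at this
    have := this.2 hc
    unfold Cr at this
    omega
  have h2 : ∃ j, t < j ∧ j ≤ d ∧ (u j = x ∨ u j = y) := by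
    by_contra hcon
    push Not at hcon
    have := side_seq (v := v) hxy ht (fun l _ hl => hu.adj l (by omega)) (fun l hl hl' => by
      rcases Nat.lt_or_ge t l with h | h
      · exact hne l (by omega) (by have := hcon l h hl'; tauto)
      · have : l = t := by omega
        rw [this]; exact hut)
    rw [hu.ud] at this
    exact hh (this.1 hc)
  obtain ⟨i, hi, hi'⟩ := h1
  obtain ⟨j, hj, hj', hj''⟩ := h2
  exact ⟨i, j, hi, hj, hj', hi', hj''⟩

/-- alternation lemma -/
theorem alternate {k : α → ℕ} {S : Finset α} (hk : Set.InjOn k S) {E : Finset (Sym2 α)}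
    (hE : ∀ a b, s(a, b) ∈ E → a ∈ S ∧ b ∈ S) (hnc : NC k E) {x₁ y₁ x₂ y₂ : α}
    (hx₁ : x₁ ∈ S) (hy₁ : y₁ ∈ S) (hy₂ : y₂ ∈ S)
    (h1 : k x₁ < k y₁) (h2 : k y₁ < k x₂) (h3 : k x₂ < k y₂)
    (hx : Rch E x₁ x₂) (hy : Rch E y₁ y₂) : Rch E x₁ y₁ := by
  by_contra hcon
  obtain ⟨p, q, hp, hpq, hPp, hPq⟩ := hx.change
    (fun z => ¬ (k y₁ < k z ∧ k z < k y₂)) (by omega) (by omega)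
  have hpS := (hE _ _ hpq).1
  have hqS := (hE _ _ hpq).2
  have hq : Rch E x₁ q := hp.tail hpq
  have ne : ∀ a b, a ∈ S → b ∈ S → Rch E x₁ a → Rch E y₁ b → k a ≠ k b := by
    intro a b ha hb h1 h2 hab
    have := hk ha hb hab
    subst this
    exact hcon (h1.trans h2.symm)
  have n1 := ne p y₁ hpS hy₁ hp Relation.ReflTransGen.refl
  have n2 := ne p y₂ hpS hy₂ hp hy
  have n3 := ne q y₁ hqS hy₁ hq Relation.ReflTransGen.refl
  have n4 := ne q y₂ hqS hy₂ hq hy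
  have hc : Cr k p q y₁ y₂ := by unfold Cr; omega
  obtain ⟨a, b, ha, hab, hPa, hPb⟩ := hy.change
    (fun z => ¬ Cr k p q y₁ z) (by unfold Cr; omega) (by simpa using hc)
  have hb : Rch E y₁ b := ha.tail hab
  have m1 := ne p a hpS (hE _ _ hab).1 hp ha
  have m2 := ne q a hqS (hE _ _ hab).1 hq ha
  have m3 := ne p b hpS (hE _ _ hab).2 hp hb
  have m4 := ne q b hqS (hE _ _ hab).2 hq hb
  have hcr := hnc _ _ _ _ hpq hab
  unfold Cr at *
  omega

/-- successor function -/
def IsNext (k : α → ℕ) (S : Finset α) (o : α) (nx : α → α) : Prop :=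
  ∀ v ∈ S, v ≠ o → nx v ∈ S ∧ k v < k (nx v) ∧ ∀ u ∈ S, k v < k u → k (nx v) ≤ k u

theorem IsNext.hull {k : α → ℕ} {S : Finset α} {o : α} {nx : α → α} (h : IsNext k S o nx)
    {v : α} (hv : v ∈ S) (hvo : v ≠ o) : Hull k S v (nx v) := by
  obtain ⟨h1, h2, h3⟩ := h v hv hvo
  intro x hx y hy hc
  have := h3 x hx
  have := h3 y hy
  unfold Cr at hc
  omega

theorem sep_three {k : α → ℕ} {S : Finset α} (hk : Set.InjOn k S) {E : Finset (Sym2 α)}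
    (hT : CT k S E) {o : α} {nx : α → α} (hn : IsNext k S o nx) {e : Sym2 α} (he : e ∈ E)
    {v₁ v₂ v₃ : α} (h₁ : v₁ ∈ S) (h₂ : v₂ ∈ S) (h₃ : v₃ ∈ S) (o₁ : v₁ ≠ o) (o₂ : v₂ ≠ o)
    (o₃ : v₃ ≠ o) (h12 : k v₁ < k v₂) (h23 : k v₂ < k v₃)
    (r₁ : ¬ Rch (E.erase e) v₁ (nx v₁)) (r₂ : ¬ Rch (E.erase e) v₂ (nx v₂))
    (r₃ : ¬ Rch (E.erase e) v₃ (nx v₃)) : False := by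
  induction e using Sym2.ind with
  | _ a b =>
  have hmem : ∀ c d, s(c, d) ∈ E.erase s(a, b) → c ∈ S ∧ d ∈ S := fun c d h =>
    (hT.mem c d (Finset.mem_of_mem_erase h)).2
  have hnc : NC k (E.erase s(a, b)) := hT.nc.mono (Finset.erase_subset _ _)
  have two : ∀ z, Rch E a z → Rch (E.erase s(a, b)) a z ∨ Rch (E.erase s(a, b)) b z := by
    intro z hz
    induction hz with
    | refl => left; exact Relation.ReflTransGen.refl
    | tail h1 h2 ih =>
      rename_i c d
      by_cases hcd : s(c, d) = s(a, b)
      · rcases Sym2.eq_iff.1 hcd with ⟨rfl, rfl⟩ | ⟨rfl, rfl⟩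
        · right; exact Relation.ReflTransGen.refl
        · left; exact Relation.ReflTransGen.refl
      · have : s(c, d) ∈ E.erase s(a, b) := Finset.mem_erase.2 ⟨hcd, h2⟩
        exact ih.imp (fun h => h.tail this) (fun h => h.tail this)
  have haS := (hT.mem _ _ he).2.1
  generalize hF : E.erase s(a, b) = F at *
  have hR : ∀ x ∈ S, ∀ y ∈ S, (Rch F a x ↔ Rch F a y) → Rch F x y := by
    intro x hx y hy hxy
    by_cases h : Rch F a x
    · exact h.symm.trans (hxy.1 h)
    · have h1 := (two x (hT.conn a haS x hx)).resolve_left h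
      have h2 := (two y (hT.conn a haS y hy)).resolve_left (fun h' => h (hxy.2 h'))
      exact h1.symm.trans h2
  obtain ⟨a1, b1, c1⟩ := hn v₁ h₁ o₁
  obtain ⟨a2, b2, c2⟩ := hn v₂ h₂ o₂
  obtain ⟨a3, b3, c3⟩ := hn v₃ h₃ o₃
  have d1 := c1 v₂ h₂ h12
  have d2 := c2 v₃ h₃ h23
  have s1 : ¬ (Rch F a v₁ ↔ Rch F a (nx v₁)) := fun h => r₁ (hR _ h₁ _ a1 h)
  have s2 : ¬ (Rch F a v₂ ↔ Rch F a (nx v₂)) := fun h => r₂ (hR _ h₂ _ a2 h)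
  have s3 : ¬ (Rch F a v₃ ↔ Rch F a (nx v₃)) := fun h => r₃ (hR _ h₃ _ a3 h)
  by_cases t1 : Rch F a v₁ ↔ Rch F a v₂
  · have hlt : k (nx v₁) < k v₂ := by
      refine lt_of_le_of_ne d1 fun h => ?_
      rw [hk a1 h₂ h] at s1
      exact s1 t1
    exact r₁ (alternate hk hmem hnc h₁ a1 a2 b1 hlt b2 (hR _ h₁ _ h₂ t1)
      (hR _ a1 _ a2 (by tauto)))
  · by_cases t2 : Rch F a v₃ ↔ Rch F a v₁
    · exact r₁ (alternate hk hmem hnc h₁ a1 a3 b1 (x₂ := nx v₂) (by omega) (by omega)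
        (hR _ h₁ _ a2 (by tauto)) (hR _ a1 _ a3 (by tauto)))
    · have hlt : k (nx v₂) < k v₃ := by
        refine lt_of_le_of_ne d2 fun h => ?_
        have := hk a2 h₃ h
        rw [this] at s2
        tauto
      exact r₁ (alternate hk hmem hnc h₁ a1 h₃ b1 (x₂ := nx v₂) (by omega) hlt
        (hR _ h₁ _ a2 (by tauto)) (hR _ a1 _ h₃ (by tauto)))

theorem sum_sep {k : α → ℕ} {S : Finset α} (hk : Set.InjOn k S) {E : Finset (Sym2 α)}
    (hT : CT k S E) {o : α} {nx : α → α} (hn : IsNext k S o nx) :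
    ∑ v ∈ S.erase o, (sepSet E v (nx v)).card ≤ 2 * E.card := by
  have h1 : ∑ v ∈ S.erase o, (sepSet E v (nx v)).card =
      ∑ e ∈ E, ((S.erase o).filter (fun v => ¬ Rch (E.erase e) v (nx v))).card := by
    simp only [sepSet]
    exact Finset.sum_card_bipartiteAbove_eq_sum_card_bipartiteBelow
      (fun v e => ¬ Rch (E.erase e) v (nx v))
  rw [h1, mul_comm]
  apply Finset.sum_le_card_nsmul
  intro e he
  by_contra hcon
  push Not at hcon
  obtain ⟨x, hx, y, hy, z, hz, hxy, hxz, hyz⟩ := Finset.two_lt_card.1 hcon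
  simp only [Finset.mem_filter, Finset.mem_erase] at hx hy hz
  have n1 : k x ≠ k y := fun h => hxy (hk hx.1.2 hy.1.2 h)
  have n2 : k x ≠ k z := fun h => hxz (hk hx.1.2 hz.1.2 h)
  have n3 : k y ≠ k z := fun h => hyz (hk hy.1.2 hz.1.2 h)
  have T := fun (v₁ v₂ v₃ : α) h₁ h₂ h₃ o₁ o₂ o₃ => sep_three (v₁ := v₁) (v₂ := v₂) (v₃ := v₃)
    hk hT hn he h₁ h₂ h₃ o₁ o₂ o₃
  rcases lt_or_gt_of_ne n1 with a | a <;> rcases lt_or_gt_of_ne n2 with b | b <;>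
    rcases lt_or_gt_of_ne n3 with c | c
  · exact T x y z hx.1.2 hy.1.2 hz.1.2 hx.1.1 hy.1.1 hz.1.1 a c hx.2 hy.2 hz.2
  · exact T x z y hx.1.2 hz.1.2 hy.1.2 hx.1.1 hz.1.1 hy.1.1 b c hx.2 hz.2 hy.2
  · omega
  · exact T z x y hz.1.2 hx.1.2 hy.1.2 hz.1.1 hx.1.1 hy.1.1 b a hz.2 hx.2 hy.2
  · exact T y x z hy.1.2 hx.1.2 hz.1.2 hy.1.1 hx.1.1 hz.1.1 a b hy.2 hx.2 hz.2
  · omega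
  · exact T y z x hy.1.2 hz.1.2 hx.1.2 hy.1.1 hz.1.1 hx.1.1 c b hy.2 hz.2 hx.2
  · exact T z y x hz.1.2 hy.1.2 hx.1.2 hz.1.1 hy.1.1 hx.1.1 c a hz.2 hy.2 hx.2

end comb3


section reach
variable {α : Type*}

theorem ReachesIn.refl' {step : α → α → Prop} {m : ℕ} (x : α) : ReachesIn step m x x :=
  ⟨0, Nat.zero_le _, fun _ => x, rfl, rfl, by simp⟩

theorem ReachesIn.single' {step : α → α → Prop} {x y : α} (h : step x y) : ReachesIn step 1 x y :=
  ⟨1, le_rfl, fun i => if i = 0 then x else y, by simp, by simp, by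
    intro i hi
    have : i = 0 := by omega
    subst this
    simpa using h⟩

theorem ReachesIn.trans' {step : α → α → Prop} {m n : ℕ} {x y z : α}
    (h1 : ReachesIn step m x y) (h2 : ReachesIn step n y z) : ReachesIn step (m + n) x z := by
  obtain ⟨a, ha, f, f0, f1, f2⟩ := h1
  obtain ⟨b, hb, g, g0, g1, g2⟩ := h2
  refine ⟨a + b, by omega, fun i => if i ≤ a then f i else g (i - a), by simp [f0], ?_, ?_⟩
  · by_cases hb0 : b = 0
    · subst hb0; simp [f1, ← g1, g0]
    · have : ¬ a + b ≤ a := by omega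
      simp only [this, if_false]; rw [← g1]; congr 1; omega
  · intro i hi
    by_cases h1 : i + 1 ≤ a
    · have h2 : i ≤ a := by omega
      simp only [h1, h2, if_true]; exact f2 i (by omega)
    · by_cases h2 : i ≤ a
      · have : i = a := by omega
        subst this
        simp only [le_refl, h1, if_true, if_false]
        rw [f1, ← g0]
        have := g2 0 (by omega)
        convert this using 2; omega
      · simp only [h1, h2, if_false]
        have := g2 (i - a) (by omega)
        convert this using 2; omega

theorem ReachesIn.symm' {step : α → α → Prop} (hs : ∀ x y, step x y → step y x) {m : ℕ} {x y : α}
    (h1 : ReachesIn step m x y) : ReachesIn step m y x := by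
  obtain ⟨a, ha, f, f0, f1, f2⟩ := h1
  refine ⟨a, ha, fun i => f (a - i), by simp [f1], by simp [f0], ?_⟩
  intro i hi
  have := hs _ _ (f2 (a - (i + 1)) (by omega))
  convert this using 2; omega

theorem ReachesIn.map' {β : Type*} {step : α → α → Prop} {step' : β → β → Prop} (g : α → β)
    (hs : ∀ x y, step x y → step' (g x) (g y)) {m : ℕ} {x y : α}
    (h1 : ReachesIn step m x y) : ReachesIn step' m (g x) (g y) := by
  obtain ⟨a, ha, f, f0, f1, f2⟩ := h1
  exact ⟨a, ha, fun i => g (f i), by simp [f0], by simp [f1], fun i hi => hs _ _ (f2 i hi)⟩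

theorem ReachesIn.of_seq {step : α → α → Prop} (f : ℕ → α) (n : ℕ)
    (h : ∀ i < n, step (f i) (f (i + 1))) : ReachesIn step n (f 0) (f n) :=
  ⟨n, le_rfl, f, rfl, rfl, h⟩

end reach

section comb4
variable {α : Type*}

def nbr (S : Finset α) (E : Finset (Sym2 α)) (v : α) : Finset α := S.filter (fun w => s(v, w) ∈ E)

theorem sum_deg {k : α → ℕ} {S : Finset α} {E : Finset (Sym2 α)} (_hT : CT k S E) :
    ∑ v ∈ S, (nbr S E v).card ≤ 2 * E.card := by
  have h1 : ∑ v ∈ S, (nbr S E v).card ≤ ∑ v ∈ S, (E.filter (fun e => v ∈ e)).card := by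
    apply Finset.sum_le_sum
    intro v hv
    apply Finset.card_le_card_of_injOn (fun w => s(v, w))
    · intro w hw
      simp only [nbr, Finset.coe_filter, Set.mem_ofPred_eq] at hw ⊢
      exact ⟨hw.2, by simp⟩
    · intro w _ w' _ h
      rcases Sym2.eq_iff.1 h with h | h
      · exact h.2
      · exact h.2.trans h.1
  have h2 : ∑ v ∈ S, (E.filter (fun e => v ∈ e)).card =
      ∑ e ∈ E, (S.filter (fun v => v ∈ e)).card :=
    Finset.sum_card_bipartiteAbove_eq_sum_card_bipartiteBelow (fun v e => v ∈ e)
  refine h1.trans (h2.le.trans ?_)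
  rw [mul_comm]
  apply Finset.sum_le_card_nsmul
  intro e he
  induction e using Sym2.ind with
  | _ a b =>
    refine le_trans (Finset.card_le_card (t := {a, b}) ?_) Finset.card_le_two
    intro v hv
    simpa using (Finset.mem_filter.1 hv).2

theorem deg_pos {k : α → ℕ} {S : Finset α} {E : Finset (Sym2 α)} (hT : CT k S E)
    (h2 : 2 ≤ S.card) {v : α} (hv : v ∈ S) : 1 ≤ (nbr S E v).card := by
  obtain ⟨u, hu, huv⟩ := Finset.exists_mem_ne (by omega : 1 < S.card) v
  rcases Relation.ReflTransGen.cases_head (hT.conn v hv u hu) with h | ⟨c, hc, _⟩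
  · exact absurd h.symm huv
  · exact Finset.card_pos.2 ⟨c, Finset.mem_filter.2 ⟨(hT.mem _ _ hc).2.2, hc⟩⟩

theorem deg_count {k : α → ℕ} {S : Finset α} {E : Finset (Sym2 α)} (hT : CT k S E)
    (h2 : 2 ≤ S.card) {o : α} (ho : o ∈ S) :
    S.card ≤ 2 * ((S.erase o).filter (fun v => (nbr S E v).card = 1)).card +
      ((S.erase o).filter (fun v => (nbr S E v).card = 2)).card := by
  have h1 := sum_deg hT
  rw [← Finset.add_sum_erase _ _ ho] at h1
  have h3 := deg_pos hT h2 ho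
  have h4 : ∑ v ∈ S.erase o, 3 ≤ ∑ v ∈ S.erase o, ((nbr S E v).card +
      2 * (if (nbr S E v).card = 1 then 1 else 0) + (if (nbr S E v).card = 2 then 1 else 0)) := by
    apply Finset.sum_le_sum
    intro v hv
    have := deg_pos hT h2 (Finset.mem_of_mem_erase hv)
    split_ifs <;> omega
  rw [Finset.sum_add_distrib, Finset.sum_add_distrib, ← Finset.mul_sum, ← Finset.card_filter,
    ← Finset.card_filter] at h4
  simp only [Finset.sum_const, smul_eq_mul] at h4
  have := Finset.card_erase_add_one ho
  have := hT.card
  omega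

theorem exists_indep {S : Finset α} {E : Finset (Sym2 α)} (D : Finset α)
    (hD : ∀ v ∈ D, (nbr S E v).card = 2) (hDS : D ⊆ S) :
    ∃ M ⊆ D, D.card ≤ 3 * M.card ∧ ∀ v ∈ M, ∀ u ∈ M, s(v, u) ∉ E ∨ v = u := by
  obtain ⟨M, hM, hmax⟩ := Finset.exists_max_image
    (D.powerset.filter (fun M => ∀ v ∈ M, ∀ u ∈ M, s(v, u) ∉ E ∨ v = u)) Finset.card
    ⟨∅, by simp⟩
  simp only [Finset.mem_filter, Finset.mem_powerset] at hM hmax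
  refine ⟨M, hM.1, ?_, hM.2⟩
  have hsub : D ⊆ M ∪ M.biUnion (nbr S E) := by
    intro v hv
    by_contra hcon
    simp only [Finset.mem_union, Finset.mem_biUnion, not_or, not_exists, not_and] at hcon
    have h1 : ∀ u ∈ M, s(u, v) ∉ E := fun u hu h =>
      hcon.2 u hu (Finset.mem_filter.2 ⟨hDS hv, h⟩)
    have := hmax (insert v M) ⟨Finset.insert_subset hv hM.1, by
      intro a ha b hb
      rcases Finset.mem_insert.1 ha with rfl | ha' <;> rcases Finset.mem_insert.1 hb with rfl | hb'
      · exact Or.inr rfl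
      · left; rw [Sym2.eq_swap]; exact h1 b hb'
      · exact Or.inl (h1 a ha')
      · exact hM.2 a ha' b hb'⟩
    rw [Finset.card_insert_of_notMem hcon.1] at this
    omega
  have h1 := Finset.card_le_card hsub
  have h2 := Finset.card_union_le M (M.biUnion (nbr S E))
  have h3 : (M.biUnion (nbr S E)).card ≤ M.card * 2 :=
    Finset.card_biUnion_le_card_mul _ _ _ fun v hv => (hD v (hM.1 hv)).le
  omega

theorem apex {k : α → ℕ} {x y w w' v : α} (h : Cr k x y w w') (h1 : k v ≠ k x) (h2 : k v ≠ k y) :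
    Cr k x y v w ∨ Cr k x y v w' := by
  unfold Cr at *
  rcases h with ⟨h | h, h' | h'⟩ | ⟨h | h, h' | h'⟩ <;> rcases lt_or_gt_of_ne h1 with a | a <;>
    rcases lt_or_gt_of_ne h2 with b | b <;> omega

theorem contract {k : α → ℕ} {S : Finset α} (hk : Set.InjOn k S) {E : Finset (Sym2 α)}
    (hT : CT k S E) {M : Finset α} (hMS : M ⊆ S)
    (hM : ∀ v ∈ M, ∀ u ∈ M, s(v, u) ∉ E ∨ v = u) {w w' : α → α}
    (hw : ∀ v ∈ M, w v ≠ w' v ∧ s(v, w v) ∈ E ∧ s(v, w' v) ∈ E ∧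
      ∀ x, s(v, x) ∈ E → x = w v ∨ x = w' v) :
    ∃ E', CStep k S E E' ∧ ∀ v ∈ M, s(v, w v) ∈ E' ∧ ∀ x, s(v, x) ∈ E' → x = w v := by
  have hM' : ∀ v ∈ M, ∀ u ∈ M, s(v, u) ∉ E := by
    intro v hv u hu h
    rcases hM v hv u hu with h' | rfl
    · exact h' h
    · exact (hT.mem _ _ h).1 rfl
  have wM : ∀ v ∈ M, w v ∉ M ∧ w' v ∉ M := fun v hv =>
    ⟨fun h => hM' v hv _ h (hw v hv).2.1, fun h => hM' v hv _ h (hw v hv).2.2.1⟩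
  have wS : ∀ v ∈ M, w v ∈ S ∧ w' v ∈ S := fun v hv =>
    ⟨(hT.mem _ _ (hw v hv).2.1).2.2, (hT.mem _ _ (hw v hv).2.2.1).2.2⟩
  let φ : Sym2 α → Sym2 α := fun e => if h : ∃ v ∈ M, s(v, w' v) = e then
    s(w h.choose, w' h.choose) else e
  have φ1 : ∀ v ∈ M, φ s(v, w' v) = s(w v, w' v) := by
    intro v hv
    have h : ∃ u ∈ M, s(u, w' u) = s(v, w' v) := ⟨v, hv, rfl⟩
    simp only [φ, dif_pos h]
    have h1 := h.choose_spec
    have : h.choose = v := by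
      rcases Sym2.eq_iff.1 h1.2 with h2 | h2
      · exact h2.1
      · exact absurd (by rw [← h2.1]; exact h1.1) (wM v hv).2
    rw [this]
  have φ2 : ∀ e, (¬ ∃ v ∈ M, s(v, w' v) = e) → φ e = e := fun e h => by simp only [φ, dif_neg h]
  have φ3 : ∀ a b, a ∉ M → b ∉ M → φ s(a, b) = s(a, b) := by
    intro a b ha hb
    apply φ2
    rintro ⟨v, hv, h⟩
    rcases Sym2.eq_iff.1 h with h | h
    · exact ha (h.1 ▸ hv)
    · exact hb (h.1 ▸ hv)
  have φ4 : ∀ v ∈ M, φ s(v, w v) = s(v, w v) := by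
    intro v hv
    apply φ2
    rintro ⟨u, hu, h⟩
    rcases Sym2.eq_iff.1 h with h | h
    · obtain ⟨rfl, h⟩ := h
      exact (hw u hu).1 h.symm
    · exact (wM v hv).1 (h.1 ▸ hu)
  have im : ∀ e ∈ E.image φ, e ∈ E ∨ ∃ v ∈ M, e = s(w v, w' v) := by
    intro e he
    obtain ⟨f, hf, rfl⟩ := Finset.mem_image.1 he
    by_cases h : ∃ v ∈ M, s(v, w' v) = f
    · obtain ⟨v, hv, rfl⟩ := h
      exact Or.inr ⟨v, hv, φ1 v hv⟩
    · rw [φ2 f h]; exact Or.inl hf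
  have kne : ∀ v ∈ M, ∀ x ∈ S, x ∉ M → k v ≠ k x := by
    intro v hv x hx hxM h
    exact hxM (hk (hMS hv) hx h ▸ hv)
  -- old edges vs new edges
  have c1 : ∀ x y, s(x, y) ∈ E → ∀ v ∈ M, ¬ Cr k x y (w v) (w' v) := by
    intro x y hxy v hv hc
    obtain ⟨a1, a2, a3, a4⟩ := hw v hv
    have hvx : v ≠ x := by
      rintro rfl
      rcases a4 y hxy with rfl | rfl <;> unfold Cr at hc <;> omega
    have hvy : v ≠ y := by
      rintro rfl
      rcases a4 x (by rwa [Sym2.eq_swap]) with rfl | rfl <;> unfold Cr at hc <;> omega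
    have m := (hT.mem _ _ hxy).2
    rcases apex hc (v := v) (fun h => hvx (hk (hMS hv) m.1 h)) (fun h => hvy (hk (hMS hv) m.2 h))
      with h | h
    · exact hT.nc _ _ _ _ hxy a2 h
    · exact hT.nc _ _ _ _ hxy a3 h
  have c2 : ∀ u ∈ M, ∀ v ∈ M, ¬ Cr k (w u) (w' u) (w v) (w' v) := by
    intro u hu v hv hc
    rcases apex hc (v := v) (kne v hv _ (wS u hu).1 (wM u hu).1)
      (kne v hv _ (wS u hu).2 (wM u hu).2) with h | h
    · exact c1 _ _ (hw v hv).2.1 u hu h.symm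
    · exact c1 _ _ (hw v hv).2.2.1 u hu h.symm
  have key : ∀ a b c d, s(a, b) ∈ E → s(c, d) ∈ E ∪ E.image φ → ¬ Cr k a b c d := by
    intro a b c d hab hcd hc
    have : s(c, d) ∈ E ∨ ∃ v ∈ M, s(c, d) = s(w v, w' v) := by
      rcases Finset.mem_union.1 hcd with h | h
      · exact Or.inl h
      · exact im _ h
    rcases this with h | ⟨v, hv, h⟩
    · exact hT.nc _ _ _ _ hab h hc
    · rcases Sym2.eq_iff.1 h with ⟨rfl, rfl⟩ | ⟨rfl, rfl⟩
      · exact c1 _ _ hab v hv hc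
      · exact c1 _ _ hab v hv hc.flip2
  have hnc : NC k (E ∪ E.image φ) := by
    refine nc_union hT.nc ?_ fun a b c d h1 h2 => key a b c d h1 (Finset.mem_union_right _ h2)
    intro a b c d hab hcd hc
    rcases im _ hab with h | ⟨v, hv, h⟩
    · exact key _ _ _ _ h (Finset.mem_union_right _ hcd) hc
    · rcases im _ hcd with h' | ⟨u, hu, h'⟩
      · exact key _ _ _ _ h' (Finset.mem_union_right _ hab) hc.symm
      · rcases Sym2.eq_iff.1 h with ⟨rfl, rfl⟩ | ⟨rfl, rfl⟩ <;>
          rcases Sym2.eq_iff.1 h' with ⟨rfl, rfl⟩ | ⟨rfl, rfl⟩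
        · exact c2 _ hv _ hu hc
        · exact c2 _ hv _ hu hc.flip2
        · exact c2 _ hv _ hu hc.flip
        · exact c2 _ hv _ hu hc.flip.flip2
  refine ⟨E.image φ, step_of_map hT φ ?_ ?_ hnc, ?_⟩
  · intro e he
    by_cases h : ∃ v ∈ M, s(v, w' v) = e
    · obtain ⟨v, hv, rfl⟩ := h
      right
      exact ⟨w' v, v, w v, Sym2.eq_swap, by rw [φ1 v hv, Sym2.eq_swap], (hw v hv).1.symm,
        (hw v hv).2.1, φ4 v hv⟩
    · exact Or.inl (φ2 e h)
  · intro e he _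
    by_cases h : ∃ v ∈ M, s(v, w' v) = e
    · obtain ⟨v, hv, rfl⟩ := h
      rw [φ1 v hv]
      exact φ3 _ _ (wM v hv).1 (wM v hv).2
    · rw [φ2 e h, φ2 e h]
  · intro v hv
    refine ⟨Finset.mem_image.2 ⟨_, (hw v hv).2.1, φ4 v hv⟩, ?_⟩
    intro x hx
    obtain ⟨f, hf, hfx⟩ := Finset.mem_image.1 hx
    by_cases h : ∃ u ∈ M, s(u, w' u) = f
    · obtain ⟨u, hu, rfl⟩ := h
      rw [φ1 u hu] at hfx
      rcases Sym2.eq_iff.1 hfx with h | h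
      · exact absurd hv (h.1 ▸ (wM u hu).1)
      · exact absurd hv (h.2 ▸ (wM u hu).2)
    · rw [φ2 f h] at hfx
      subst hfx
      rcases (hw v hv).2.2.2 x hf with h' | h'
      · exact h'
      · exact absurd ⟨v, hv, by rw [h']⟩ h

theorem phase1 {k : α → ℕ} {S : Finset α} (hk : Set.InjOn k S) {E : Finset (Sym2 α)}
    (hT : CT k S E) (h2 : 2 ≤ S.card) {o : α} (ho : o ∈ S) :
    ∃ E' B, ∃ w : α → α, ReachesIn (CStep k S) 1 E E' ∧ CT k S E' ∧ B ⊆ S.erase o ∧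
      S.card ≤ 6 * B.card ∧ ∀ v ∈ B, s(v, w v) ∈ E' ∧ ∀ x, s(v, x) ∈ E' → x = w v := by
  have hc := deg_count hT h2 ho
  have hN : ∀ v x, s(v, x) ∈ E → x ∈ nbr S E v := fun v x h =>
    Finset.mem_filter.2 ⟨(hT.mem _ _ h).2.2, h⟩
  by_cases h1 : S.card ≤ 6 * ((S.erase o).filter (fun v => (nbr S E v).card = 1)).card
  · have : ∀ v, ∃ w, v ∈ (S.erase o).filter (fun v => (nbr S E v).card = 1) →
        nbr S E v = {w} := by
      intro v
      by_cases hv : (nbr S E v).card = 1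
      · obtain ⟨w, hw⟩ := Finset.card_eq_one.1 hv
        exact ⟨w, fun _ => hw⟩
      · exact ⟨v, fun h => absurd (Finset.mem_filter.1 h).2 hv⟩
    choose w hw using this
    refine ⟨E, _, w, ReachesIn.refl' _, hT, Finset.filter_subset _ _, h1, ?_⟩
    intro v hv
    have := hw v hv
    constructor
    · have h3 : w v ∈ nbr S E v := by rw [this]; simp
      exact (Finset.mem_filter.1 h3).2
    · intro x hx
      have := hN v x hx
      rw [hw v hv] at this
      simpa using this
  · obtain ⟨M, hMD, hMc, hM⟩ := exists_indep (S := S) (E := E)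
      ((S.erase o).filter (fun v => (nbr S E v).card = 2))
      (fun v hv => (Finset.mem_filter.1 hv).2)
      ((Finset.filter_subset _ _).trans (Finset.erase_subset _ _))
    have : ∀ v, ∃ w w', v ∈ M → w ≠ w' ∧ nbr S E v = {w, w'} := by
      intro v
      by_cases hv : (nbr S E v).card = 2
      · obtain ⟨w, w', hw⟩ := Finset.card_eq_two.1 hv
        exact ⟨w, w', fun _ => hw⟩
      · exact ⟨v, v, fun h => absurd (Finset.mem_filter.1 (hMD h)).2 hv⟩
    choose w w' hw using this
    have hMS : M ⊆ S.erase o := hMD.trans (Finset.filter_subset _ _)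
    obtain ⟨E', hst, hE'⟩ := contract hk hT (hMS.trans (Finset.erase_subset _ _)) hM
      (w := w) (w' := w') (by
        intro v hv
        obtain ⟨h3, h4⟩ := hw v hv
        have h5 : w v ∈ nbr S E v := by rw [h4]; simp
        have h6 : w' v ∈ nbr S E v := by rw [h4]; simp
        refine ⟨h3, (Finset.mem_filter.1 h5).2, (Finset.mem_filter.1 h6).2, ?_⟩
        intro x hx
        have := hN v x hx
        rw [h4] at this
        simpa using this)
    exact ⟨E', M, w, ReachesIn.single' hst, hst.2.1, hMS, by omega, hE'⟩

end comb4


section comb5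
variable {α : Type*}

theorem ears_congr {A : Finset α} {w w' : α → α} (h : ∀ v ∈ A, w v = w' v) :
    ears A w = ears A w' := by
  unfold ears
  apply Finset.image_congr
  intro v hv
  simp only [h v hv]

theorem walk {k : α → ℕ} {S A : Finset α} (hk : Set.InjOn k S) {E : Finset (Sym2 α)}
    (hT : CT k S E) (hA : A ⊆ S) {w nx : α → α} {d : α → ℕ} {u : α → ℕ → α} {N : ℕ}
    (hl : ∀ v ∈ A, s(v, w v) ∈ E ∧ ∀ x, s(v, x) ∈ E → x = w v)
    (hn : ∀ v ∈ A, nx v ∉ A ∧ Hull k S v (nx v))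
    (hu : ∀ v ∈ A, SP E v (nx v) (d v) (u v)) (hd : ∀ v ∈ A, d v ≤ N) :
    ReachesIn (CStep k S) N E ((E \ ears A w) ∪ ears A nx) ∧ CT k (S \ A) (E \ ears A w) := by
  have d1 : ∀ v ∈ A, 1 ≤ d v := by
    intro v hv
    by_contra h
    have h0 : d v = 0 := by omega
    have h1 := (hu v hv).ud
    rw [h0, (hu v hv).u0] at h1
    exact (hn v hv).1 (h1 ▸ hv)
  have f1 : ∀ v ∈ A, ∀ i, 1 ≤ i → i ≤ d v → u v i ∈ S \ A := by
    intro v hv i hi hid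
    have h1 := (hu v hv).adj (i - 1) (by omega)
    rw [Nat.sub_add_cancel hi] at h1
    refine Finset.mem_sdiff.2 ⟨(hT.mem _ _ h1).2.2, fun hA' => ?_⟩
    rcases Nat.eq_or_lt_of_le hid with h | h
    · rw [h, (hu v hv).ud] at hA'
      exact (hn v hv).1 hA'
    · have h2 := (hl _ hA').2 _ ((hu v hv).adj i h)
      have h3 := (hl _ hA').2 (u v (i - 1)) (by rw [Sym2.eq_swap]; exact h1)
      exact (hu v hv).inj (i - 1) (i + 1) (by omega) (by omega) (h3.trans h2.symm)
  have w1 : ∀ v ∈ A, u v 1 = w v := by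
    intro v hv
    have h := (hu v hv).adj 0 (d1 v hv)
    rw [(hu v hv).u0] at h
    exact (hl v hv).2 _ h
  have wA : ∀ v ∈ A, w v ∉ A := by
    intro v hv
    rw [← w1 v hv]
    exact (Finset.mem_sdiff.1 (f1 v hv 1 le_rfl (d1 v hv))).2
  obtain ⟨hT', hE⟩ := ct_delete hT hA (w := w) (fun v hv => ⟨(hl v hv).1, wA v hv, (hl v hv).2⟩)
  refine ⟨?_, hT'⟩
  have hES : ∀ a b, s(a, b) ∈ E → a ∈ S ∧ b ∈ S := fun a b h => (hT.mem a b h).2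
  have f2 : ∀ v ∈ A, ∀ i, i ≤ d v → ∀ x y, s(x, y) ∈ E → ¬ Cr k x y v (u v i) := by
    intro v hv i hi x y hxy hc
    have hS := hES _ _ hxy
    obtain ⟨a, b, h1, h2, h3, h4, h5⟩ := (hu v hv).cross hk hES (hA hv) hS.1 hS.2
      (fun a b hab => hT.nc _ _ _ _ hxy hab) ((hn v hv).2 x hS.1 y hS.2) hi hc
    have hne := (hu v hv).inj a b (by omega) h3
    have he : s(u v a, u v b) ∈ E := by
      rcases h4 with h4 | h4 <;> rcases h5 with h5 | h5
      · exact absurd (h4.trans h5.symm) hne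
      · rw [h4, h5]; exact hxy
      · rw [h4, h5, Sym2.eq_swap]; exact hxy
      · exact absurd (h4.trans h5.symm) hne
    have := (hu v hv).chord a b (by omega) h3 he
    omega
  have f3 : ∀ v ∈ A, ∀ i, 1 ≤ i → i ≤ d v → ∀ v' ∈ A, ∀ j, j ≤ d v' →
      ¬ Cr k v (u v i) v' (u v' j) := by
    intro v hv i hi hid v' hv' j hj hc
    have hy := (Finset.mem_sdiff.1 (f1 v hv i hi hid)).1
    obtain ⟨a, b, h1, h2, h3, h4, h5⟩ := (hu v' hv').cross hk hES (hA hv') (hA hv) hy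
      (fun a b hab h => f2 v hv i hid a b hab h.symm) ((hn v' hv').2 v (hA hv) _ hy) hj hc
    have hne := (hu v' hv').inj a b (by omega) h3
    have hb := (Finset.mem_sdiff.1 (f1 v' hv' b (by omega) h3)).2
    rcases h5 with h5 | h5
    · exact hb (h5 ▸ hv)
    · rcases h4 with h4 | h4
      · rcases Nat.eq_zero_or_pos a with rfl | ha
        · rw [(hu v' hv').u0] at h4
          subst h4
          exact not_cr_self hc
        · exact (Finset.mem_sdiff.1 (f1 v' hv' a ha (by omega))).2 (h4 ▸ hv)
      · exact hne (h4.trans h5.symm)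
  let W : ℕ → α → α := fun t v => u v (min (t + 1) (d v))
  have Wm : ∀ t, ∀ v ∈ A, W t v ∈ S \ A := fun t v hv =>
    f1 v hv _ (by have := d1 v hv; omega) (min_le_right _ _)
  have hncT : NC k (E \ ears A w) := hT'.nc
  have em : ∀ t e, e ∈ ears A (W t) ∪ ears A (W (t + 1)) →
      ∃ v ∈ A, ∃ i, 1 ≤ i ∧ i ≤ d v ∧ s(v, u v i) = e := by
    intro t e he
    rcases Finset.mem_union.1 he with h | h <;> obtain ⟨v, hv, rfl⟩ := mem_ears.1 h
    · exact ⟨v, hv, _, by have := d1 v hv; omega, min_le_right _ _, rfl⟩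
    · exact ⟨v, hv, _, by have := d1 v hv; omega, min_le_right _ _, rfl⟩
  have step : ∀ t, CStep k S ((E \ ears A w) ∪ ears A (W t)) ((E \ ears A w) ∪ ears A (W (t+1))) := by
    intro t
    have := move_step (A := A) (w := W t) (w' := W (t + 1)) hT' Finset.sdiff_disjoint (Wm t)
      (Wm (t + 1)) ?_ ?_
    · rwa [Finset.sdiff_union_of_subset hA] at this
    · intro v hv
      by_cases h : t + 1 < d v
      · right
        have h1 : min (t + 1) (d v) = t + 1 := by omega
        have h2 : min (t + 1 + 1) (d v) = t + 1 + 1 := by omega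
        simp only [W, h1, h2]
        refine Finset.mem_sdiff.2 ⟨(hu v hv).adj _ h, fun hh => ?_⟩
        obtain ⟨v', hv', he⟩ := mem_ears.1 hh
        have a1 := (Finset.mem_sdiff.1 (f1 v hv (t + 1) (by omega) (by omega))).2
        have a2 := (Finset.mem_sdiff.1 (f1 v hv (t + 1 + 1) (by omega) (by omega))).2
        rcases Sym2.eq_iff.1 he with h | h
        · exact a1 (h.1 ▸ hv')
        · exact a2 (h.1 ▸ hv')
      · left
        have h1 : min (t + 1) (d v) = d v := by omega
        have h2 : min (t + 1 + 1) (d v) = d v := by omega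
        simp only [W, h1, h2]
    · refine nc_union hncT ?_ ?_
      · intro a b c e hab hce hc
        obtain ⟨v, hv, i, hi, hid, h⟩ := em t _ hab
        obtain ⟨v', hv', i', hi', hid', h'⟩ := em t _ hce
        rcases Sym2.eq_iff.1 h with ⟨rfl, rfl⟩ | ⟨rfl, rfl⟩ <;>
          rcases Sym2.eq_iff.1 h' with ⟨rfl, rfl⟩ | ⟨rfl, rfl⟩
        · exact f3 _ hv _ hi hid _ hv' _ hid' hc
        · exact f3 _ hv _ hi hid _ hv' _ hid' hc.flip2
        · exact f3 _ hv _ hi hid _ hv' _ hid' hc.flip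
        · exact f3 _ hv _ hi hid _ hv' _ hid' hc.flip.flip2
      · intro a b c e hab hce hc
        have hab' := (Finset.mem_sdiff.1 hab).1
        obtain ⟨v', hv', i', hi', hid', h'⟩ := em t _ hce
        rcases Sym2.eq_iff.1 h' with ⟨rfl, rfl⟩ | ⟨rfl, rfl⟩
        · exact f2 _ hv' _ hid' _ _ hab' hc
        · exact f2 _ hv' _ hid' _ _ hab' hc.flip2
  have := ReachesIn.of_seq (fun t => (E \ ears A w) ∪ ears A (W t)) N (fun t _ => step t)
  have e0 : ears A (W 0) = ears A w := ears_congr fun v hv => by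
    have h1 : min (0 + 1) (d v) = 1 := by have := d1 v hv; omega
    simp only [W, h1, w1 v hv]
  have eN : ears A (W N) = ears A nx := ears_congr fun v hv => by
    have h1 : min (N + 1) (d v) = d v := by have := hd v hv; omega
    simp only [W, h1, (hu v hv).ud]
  simp only [e0, eN, hE] at this
  exact this

/-- Every finite set with injective key has a successor function. -/
theorem exists_next {k : α → ℕ} {S : Finset α} (hk : Set.InjOn k S) {o : α} (ho : o ∈ S)
    (hmax : ∀ v ∈ S, k v ≤ k o) : ∃ nx, IsNext k S o nx := by
  have : ∀ v, ∃ y, v ∈ S → v ≠ o → y ∈ S ∧ k v < k y ∧ ∀ u ∈ S, k v < k u → k y ≤ k u := by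
    intro v
    by_cases hv : v ∈ S ∧ v ≠ o
    · have hlt : k v < k o := lt_of_le_of_ne (hmax v hv.1) fun h => hv.2 (hk hv.1 ho h)
      obtain ⟨y, hy, hm⟩ := Finset.exists_min_image (S.filter (fun u => k v < k u)) k
        ⟨o, Finset.mem_filter.2 ⟨ho, hlt⟩⟩
      rw [Finset.mem_filter] at hy
      exact ⟨y, fun _ _ => ⟨hy.1, hy.2, fun u hu h => hm u (Finset.mem_filter.2 ⟨hu, h⟩)⟩⟩
    · exact ⟨v, fun h1 h2 => absurd ⟨h1, h2⟩ hv⟩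
  choose nx hnx using this
  exact ⟨nx, fun v hv hvo => hnx v hv hvo⟩

def rk (k : α → ℕ) (S : Finset α) (v : α) : ℕ := (S.filter (fun u => k u < k v)).card

theorem rk_next {k : α → ℕ} {S : Finset α} (hk : Set.InjOn k S) {o : α} {nx : α → α}
    (hn : IsNext k S o nx) {v : α} (hv : v ∈ S) (hvo : v ≠ o) : rk k S (nx v) = rk k S v + 1 := by
  obtain ⟨h1, h2, h3⟩ := hn v hv hvo
  unfold rk
  have : S.filter (fun u => k u < k (nx v)) = insert v (S.filter (fun u => k u < k v)) := by
    ext x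
    simp only [Finset.mem_filter, Finset.mem_insert]
    constructor
    · rintro ⟨hx, hlt⟩
      rcases lt_trichotomy (k x) (k v) with h | h | h
      · exact Or.inr ⟨hx, h⟩
      · exact Or.inl (hk hx hv h)
      · have := h3 x hx h; omega
    · rintro (rfl | ⟨hx, hlt⟩)
      · exact ⟨hv, h2⟩
      · exact ⟨hx, by omega⟩
  rw [this, Finset.card_insert_of_notMem (by simp)]

theorem phase2 {k : α → ℕ} {S : Finset α} (hk : Set.InjOn k S) {E : Finset (Sym2 α)}
    (hT : CT k S E) {o : α} {nx : α → α} (hn : IsNext k S o nx) {B : Finset α}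
    (hB : B ⊆ S.erase o) (hBc : S.card ≤ 6 * B.card) {w : α → α}
    (hl : ∀ v ∈ B, s(v, w v) ∈ E ∧ ∀ x, s(v, x) ∈ E → x = w v) :
    ∃ A ⊆ S.erase o, ∃ T, S.card ≤ 24 * A.card ∧ (∀ v ∈ A, nx v ∉ A) ∧ CT k (S \ A) T ∧
      ReachesIn (CStep k S) 24 E (T ∪ ears A nx) := by
  have hsum := sum_sep hk hT hn
  have hbad : 25 * (B.filter (fun v => ¬ (sepSet E v (nx v)).card ≤ 24)).card ≤ 2 * E.card := by
    refine le_trans ?_ hsum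
    refine le_trans ?_ (Finset.sum_le_sum_of_subset (s := B.filter
      (fun v => ¬ (sepSet E v (nx v)).card ≤ 24)) ((Finset.filter_subset _ _).trans hB))
    rw [mul_comm]
    rw [← smul_eq_mul]
    refine Finset.card_nsmul_le_sum _ _ _ ?_
    intro v hv
    have := (Finset.mem_filter.1 hv).2
    omega
  have hE := hT.card
  have hs1 := Finset.card_filter_add_card_filter_not (s := B)
    (fun v => (sepSet E v (nx v)).card ≤ 24)
  set G := B.filter (fun v => (sepSet E v (nx v)).card ≤ 24) with hG
  have hs2 := Finset.card_filter_add_card_filter_not (s := G) (fun v => rk k S v % 2 = 0)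
  have hGB : G ⊆ B := Finset.filter_subset _ _
  have key : ∃ A ⊆ G, S.card ≤ 24 * A.card ∧ ∀ v ∈ A, nx v ∉ A := by
    by_cases hc : S.card ≤ 24 * (G.filter (fun v => rk k S v % 2 = 0)).card
    · refine ⟨_, Finset.filter_subset _ _, hc, ?_⟩
      intro v hv hnv
      have h1 := Finset.mem_filter.1 hv
      have h2 := Finset.mem_filter.1 hnv
      have h3 := Finset.mem_erase.1 (hB (hGB h1.1))
      have := rk_next hk hn h3.2 h3.1
      omega
    · refine ⟨G.filter (fun v => ¬ rk k S v % 2 = 0), Finset.filter_subset _ _, by omega, ?_⟩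
      intro v hv hnv
      have h1 := Finset.mem_filter.1 hv
      have h2 := Finset.mem_filter.1 hnv
      have h3 := Finset.mem_erase.1 (hB (hGB h1.1))
      have := rk_next hk hn h3.2 h3.1
      omega
  obtain ⟨A, hAG, hAc, hAn⟩ := key
  have hAe : A ⊆ S.erase o := hAG.trans (hGB.trans hB)
  have hAS : A ⊆ S := hAe.trans (Finset.erase_subset _ _)
  have hsp : ∀ v, ∃ d u, v ∈ A → SP E v (nx v) d u := by
    intro v
    by_cases hv : v ∈ A
    · obtain ⟨d, u, h⟩ := exists_sp (hT.conn v (hAS hv) (nx v)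
        (hn v (hAS hv) (Finset.mem_erase.1 (hAe hv)).1).1)
      exact ⟨d, u, fun _ => h⟩
    · exact ⟨0, fun _ => v, fun h => absurd h hv⟩
  choose d u hu using hsp
  obtain ⟨h1, h2⟩ := walk hk hT hAS (w := w) (nx := nx) (d := d) (u := u) (N := 24)
    (fun v hv => hl v (hGB (hAG hv)))
    (fun v hv => ⟨hAn v hv, hn.hull (hAS hv) (Finset.mem_erase.1 (hAe hv)).1⟩) hu
    (fun v hv => ((hu v hv).le_sep hT).trans (Finset.mem_filter.1 (hAG hv)).2)
  exact ⟨A, hAe, _, hAc, hAn, h2, h1⟩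

def cstar (S : Finset α) (o : α) : Finset (Sym2 α) := ears (S.erase o) (fun _ => o)

theorem ct_star {k : α → ℕ} {S : Finset α} {o : α} (ho : o ∈ S) : CT k S (cstar S o) := by
  have h0 : CT k {o} ∅ := ⟨by simp, by intro a b c d h; simp at h, by simp, by
    intro p hp q hq
    rw [Finset.mem_singleton] at hp hq
    subst hp; subst hq
    exact Relation.ReflTransGen.refl⟩
  have hnc : NC k (cstar S o) := by
    intro a b c d h1 h2 hc
    obtain ⟨x, hx, h1⟩ := mem_ears.1 h1
    obtain ⟨y, hy, h2⟩ := mem_ears.1 h2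
    rcases Sym2.eq_iff.1 h1 with ⟨rfl, rfl⟩ | ⟨rfl, rfl⟩ <;>
      rcases Sym2.eq_iff.1 h2 with ⟨rfl, rfl⟩ | ⟨rfl, rfl⟩ <;> unfold Cr at hc <;> omega
  have := ct_ears (A := S.erase o) (w := fun _ => o) h0 (by simp) (by simp) (by
    rw [Finset.empty_union]; exact hnc)
  rw [Finset.empty_union] at this
  have hS : S = {o} ∪ S.erase o := by
    rw [← Finset.insert_eq, Finset.insert_erase ho]
  rw [← hS] at this
  exact this

theorem star_move {k : α → ℕ} {S A : Finset α} {o : α} (ho : o ∈ S) (hA : A ⊆ S.erase o)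
    {nx : α → α} (hn : IsNext k S o nx) (hAn : ∀ v ∈ A, nx v ∉ A) :
    ReachesIn (CStep k S) 1 (cstar (S \ A) o ∪ ears A nx) (cstar S o) := by
  have hAS : A ⊆ S := hA.trans (Finset.erase_subset _ _)
  have hAo : ∀ v ∈ A, v ≠ o := fun v hv => (Finset.mem_erase.1 (hA hv)).1
  have hoA : o ∉ A := fun h => hAo o h rfl
  have ho' : o ∈ S \ A := Finset.mem_sdiff.2 ⟨ho, hoA⟩
  have nS : ∀ v ∈ A, nx v ∈ S := fun v hv => (hn v (hAS hv) (hAo v hv)).1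
  have he : cstar (S \ A) o ∪ ears A (fun _ => o) = cstar S o := by
    ext e
    simp only [cstar, Finset.mem_union, mem_ears, Finset.mem_erase, Finset.mem_sdiff]
    constructor
    · rintro (⟨v, h, rfl⟩ | ⟨v, h, rfl⟩)
      · exact ⟨v, ⟨h.1, h.2.1⟩, rfl⟩
      · exact ⟨v, ⟨hAo v h, hAS h⟩, rfl⟩
    · rintro ⟨v, h, rfl⟩
      by_cases hv : v ∈ A
      · exact Or.inr ⟨v, hv, rfl⟩
      · exact Or.inl ⟨v, ⟨h.1, h.2, hv⟩, rfl⟩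
  have hS : S \ A ∪ A = S := Finset.sdiff_union_of_subset hAS
  have hmv := move_step (k := k) (S := S \ A) (A := A) (T := cstar (S \ A) o) (w := nx)
    (w' := fun _ => o) (ct_star ho') Finset.sdiff_disjoint
    (fun v hv => Finset.mem_sdiff.2 ⟨nS v hv, hAn v hv⟩) (fun v hv => ho') ?_ ?_
  · rw [hS, he] at hmv
    exact ReachesIn.single' hmv
  · intro v hv
    by_cases h : nx v = o
    · exact Or.inl h.symm
    · exact Or.inr (mem_ears.2 ⟨nx v, Finset.mem_erase.2 ⟨h, Finset.mem_sdiff.2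
        ⟨nS v hv, hAn v hv⟩⟩, rfl⟩)
  · rw [Finset.union_comm (ears A nx), ← Finset.union_assoc, he]
    exact nc_hull (S := S) (fun a b h => ((ct_star (k := k) ho).mem a b h).2)
      (fun v hv => ⟨hAS hv, nS v hv⟩) (ct_star ho).nc
      (fun v hv => hn.hull (hAS hv) (hAo v hv))

theorem reach_star (N : ℕ) : ∀ {k : α → ℕ} {S : Finset α} (_ : S.card = N)
    (_ : Set.InjOn k S) {E : Finset (Sym2 α)} (_ : CT k S E) {o : α} (_ : o ∈ S)
    (_ : ∀ v ∈ S, k v ≤ k o),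
    ∃ m : ℕ, (m : ℝ) ≤ 24 * 26 * Real.log N ∧ ReachesIn (CStep k S) m E (cstar S o) := by
  induction N using Nat.strong_induction_on with
  | _ N ih =>
  intro k S hN hk E hT o ho hmax
  have hpos : 1 ≤ N := by rw [← hN]; exact Finset.card_pos.2 ⟨o, ho⟩
  by_cases h1 : N = 1
  · subst h1
    have hE : E = ∅ := by
      have := hT.card
      exact Finset.card_eq_zero.1 (by omega)
    have hS : S = {o} := by
      obtain ⟨a, rfl⟩ := Finset.card_eq_one.1 hN
      rw [Finset.mem_singleton.1 ho]
    refine ⟨0, by simp, ?_⟩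
    have : cstar S o = E := by rw [hE, hS]; simp [cstar, ears]
    rw [this]
    exact ReachesIn.refl' _
  obtain ⟨nx, hn⟩ := exists_next hk ho hmax
  obtain ⟨E', B, w, r1, hT', hB, hBc, hl⟩ := phase1 hk hT (by omega) ho
  obtain ⟨A, hA, T, hAc, hAn, hTT, r2⟩ := phase2 hk hT' hn hB hBc hl
  have hAS : A ⊆ S := hA.trans (Finset.erase_subset _ _)
  have hAo : ∀ v ∈ A, v ≠ o := fun v hv => (Finset.mem_erase.1 (hA hv)).1
  have hoA : o ∉ A := fun h => hAo o h rfl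
  have ho' : o ∈ S \ A := Finset.mem_sdiff.2 ⟨ho, hoA⟩
  have hcard := Finset.card_sdiff_add_card_eq_card hAS
  have hpos' : 1 ≤ (S \ A).card := Finset.card_pos.2 ⟨o, ho'⟩
  obtain ⟨m, hm, r3⟩ := ih (S \ A).card (by omega) rfl
    (hk.mono (by intro x hx; exact (Finset.mem_sdiff.1 hx).1)) hTT ho'
    (fun v hv => hmax v (Finset.mem_sdiff.1 hv).1)
  have hS : S \ A ∪ A = S := Finset.sdiff_union_of_subset hAS
  have r3' : ReachesIn (CStep k S) m (T ∪ ears A nx) (cstar (S \ A) o ∪ ears A nx) := by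
    refine r3.map' (fun X => X ∪ ears A nx) ?_
    intro X Y h
    have := lift_step (A := A) (w := nx) Finset.sdiff_disjoint
      (fun v hv => Finset.mem_sdiff.2 ⟨(hn v (hAS hv) (hAo v hv)).1, hAn v hv⟩)
      (fun v hv => by rw [hS]; exact hn.hull (hAS hv) (hAo v hv)) h
    rwa [hS] at this
  refine ⟨1 + 24 + m + 1, ?_, ((r1.trans' r2).trans' r3').trans' (star_move ho hA hn hAn)⟩
  have hN0 : (0 : ℝ) < N := by exact_mod_cast hpos
  have hM0 : (0 : ℝ) < ((S \ A).card : ℝ) := by exact_mod_cast hpos'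
  have hlog := Real.one_sub_inv_le_log_of_pos (div_pos hN0 hM0)
  rw [Real.log_div hN0.ne' hM0.ne', inv_div] at hlog
  have hfr : ((S \ A).card : ℝ) / N ≤ 23 / 24 := by
    rw [div_le_iff₀ hN0]
    have h2 : 24 * (S \ A).card ≤ 23 * N := by omega
    have h3 : (24 : ℝ) * (S \ A).card ≤ 23 * N := by exact_mod_cast h2
    linarith
  push_cast
  linarith

end comb5


theorem cstep_nc {α : Type*} {k : α → ℕ} {S : Finset α} {E₁ E₂ : Finset (Sym2 α)}
    (h : CStep k S E₁ E₂) (a b c d : α) (x : s(a, b) ∈ E₁ ∨ s(a, b) ∈ E₂)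
    (y : s(c, d) ∈ E₁ ∨ s(c, d) ∈ E₂) : ¬ Cr k a b c d :=
  h.2.2.1 a b c d (Finset.mem_union.2 x) (Finset.mem_union.2 y)

def ori (p q r : Pt) : ℝ := (q.1 - p.1) * (r.2 - p.2) - (q.2 - p.2) * (r.1 - p.1)

theorem cp_tri {S : Finset Pt} (h : ConvexPos S) {p a b c : Pt} (hp : p ∈ S) (ha : a ∈ S)
    (hb : b ∈ S) (hc : c ∈ S) (hap : a ≠ p) (hbp : b ≠ p) (hcp : c ≠ p) {x y z : ℝ}
    (hx : 0 ≤ x) (hy : 0 ≤ y) (hz : 0 ≤ z) (hs : x + y + z = 1)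
    (h1 : p.1 = x * a.1 + y * b.1 + z * c.1) (h2 : p.2 = x * a.2 + y * b.2 + z * c.2) : False := by
  apply h p hp
  have e : p = x • a + y • b + z • c := by
    ext
    · simpa using h1
    · simpa using h2
  have m : ∀ q, q ∈ S → q ≠ p → q ∈ convexHull ℝ ((S : Set Pt) \ {p}) := fun q hq hqp =>
    subset_convexHull ℝ _ ⟨hq, hqp⟩
  have := (convex_convexHull ℝ ((S : Set Pt) \ {p})).sum_mem (t := Finset.univ)
    (w := ![x, y, z]) (z := ![a, b, c])
    (by intro i _; fin_cases i <;> simpa) (by simp [Fin.sum_univ_three, hs])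
    (by intro i _; fin_cases i; exacts [m a ha hap, m b hb hbp, m c hc hcp])
  rw [e] at this ⊢
  simpa [Fin.sum_univ_three] using this

theorem cp_sep {S : Finset Pt} (h : ConvexPos S) {p : Pt} (hp : p ∈ S) :
    ∃ α β : ℝ, ∀ v ∈ S, v ≠ p → 0 < α * (v.1 - p.1) + β * (v.2 - p.2) := by
  have hfin : ((S : Set Pt) \ {p}).Finite := S.finite_toSet.subset Set.sdiff_subset
  obtain ⟨f, u, h1, h2⟩ := geometric_hahn_banach_point_closed (convex_convexHull ℝ _)
    (hfin.isClosed_convexHull ℝ) (h p hp)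
  have hf : ∀ v : Pt, f v = f (1, 0) * v.1 + f (0, 1) * v.2 := by
    intro v
    have : v = v.1 • ((1, 0) : Pt) + v.2 • ((0, 1) : Pt) := by ext <;> simp
    conv_lhs => rw [this]
    rw [map_add, map_smul, map_smul, smul_eq_mul, smul_eq_mul]; ring
  refine ⟨f (1, 0), f (0, 1), fun v hv hvp => ?_⟩
  have h3 := h2 v (subset_convexHull ℝ _ ⟨hv, hvp⟩)
  rw [hf] at h1 h3
  linarith

theorem exists_key {S : Finset Pt} (h : ConvexPos S) : ∃ k : Pt → ℕ, Set.InjOn k S ∧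
    ∀ a ∈ S, ∀ b ∈ S, ∀ c ∈ S, k a < k b → k b < k c → 0 < ori a b c := by
  rcases S.eq_empty_or_nonempty with rfl | ⟨p, hp⟩
  · exact ⟨fun _ => 0, by simp, by simp⟩
  obtain ⟨α, β, hL⟩ := cp_sep h hp
  let L : Pt → ℝ := fun v => α * (v.1 - p.1) + β * (v.2 - p.2)
  let M : Pt → ℝ := fun v => -β * (v.1 - p.1) + α * (v.2 - p.2)
  let τ : Pt → ℝ := fun v => M v / L v
  have hL' : ∀ v ∈ S, v ≠ p → 0 < L v := hL
  have hid : ∀ a b : Pt, ori p a b * (α ^ 2 + β ^ 2) = L a * M b - M a * L b := by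
    intro a b; simp only [ori, L, M]; ring
  have hpos : ∀ v ∈ S, v ≠ p → 0 < α ^ 2 + β ^ 2 := by
    intro v hv hvp
    have h1 := hL v hv hvp
    by_contra hc
    have ha : α = 0 := by nlinarith [sq_nonneg α, sq_nonneg β]
    have hb : β = 0 := by nlinarith [sq_nonneg α, sq_nonneg β]
    rw [ha, hb] at h1; simp at h1
  have hlt : ∀ a ∈ S, a ≠ p → ∀ b ∈ S, b ≠ p → τ a < τ b → 0 < ori p a b := by
    intro a ha hap b hb hbp hab
    rw [div_lt_div_iff₀ (hL' a ha hap) (hL' b hb hbp)] at hab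
    have h1 := hid a b
    have h2 := hpos a ha hap
    by_contra hc
    nlinarith [mul_nonneg (sub_nonneg.2 (not_lt.1 hc)) h2.le]
  have hinj : ∀ a ∈ S, a ≠ p → ∀ b ∈ S, b ≠ p → τ a = τ b → a = b := by
    intro a ha hap b hb hbp hab
    have la := hL' a ha hap
    have lb := hL' b hb hbp
    rw [div_eq_div_iff la.ne' lb.ne'] at hab
    have h2 := hpos a ha hap
    have h1 : ori p a b = 0 := by
      have := hid a b
      have h3 : ori p a b * (α ^ 2 + β ^ 2) = 0 := by rw [this]; linarith
      exact (mul_eq_zero.1 h3).resolve_right h2.ne'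
    have e1 : L a * (b.1 - p.1) = L b * (a.1 - p.1) := by
      have : L a * (b.1 - p.1) - L b * (a.1 - p.1) = -β * ori p a b := by
        simp only [L, ori]; ring
      rw [h1] at this; linarith
    have e2 : L a * (b.2 - p.2) = L b * (a.2 - p.2) := by
      have : L a * (b.2 - p.2) - L b * (a.2 - p.2) = α * ori p a b := by
        simp only [L, ori]; ring
      rw [h1] at this; linarith
    have main : ∀ a ∈ S, a ≠ p → ∀ b ∈ S, b ≠ p → 0 < L a → 0 < L b → L a ≤ L b →
        L a * (b.1 - p.1) = L b * (a.1 - p.1) → L a * (b.2 - p.2) = L b * (a.2 - p.2) → a = b := by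
      intro a ha hap b hb hbp la lb hle e1 e2
      by_contra hab
      refine cp_tri h ha hp hb hb (Ne.symm hap) (Ne.symm hab) (Ne.symm hab)
        (x := 1 - L a / L b) (y := L a / L b) (z := 0)
        (sub_nonneg.2 ((div_le_one lb).2 hle)) (div_pos la lb).le le_rfl (by ring) ?_ ?_
      · have : a.1 - p.1 = L a / L b * (b.1 - p.1) := by
          rw [div_mul_eq_mul_div, e1]; field_simp
        linarith
      · have : a.2 - p.2 = L a / L b * (b.2 - p.2) := by
          rw [div_mul_eq_mul_div, e2]; field_simp
        linarith
    rcases le_total (L a) (L b) with hle | hle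
    · exact main a ha hap b hb hbp la lb hle e1 e2
    · exact (main b hb hbp a ha hap lb la hle e1.symm e2.symm).symm
  let k : Pt → ℕ := fun v => if v = p then 0 else
    1 + ((S.erase p).filter (fun u => τ u < τ v)).card
  have kp : k p = 0 := by simp [k]
  have kn : ∀ v, v ≠ p → k v = 1 + ((S.erase p).filter (fun u => τ u < τ v)).card := by
    intro v hv; simp [k, hv]
  have kmono : ∀ a ∈ S, a ≠ p → ∀ b, b ≠ p → τ a < τ b → k a < k b := by
    intro a ha hap b hbp hab
    rw [kn a hap, kn b hbp]
    apply Nat.add_lt_add_left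
    apply Finset.card_lt_card
    rw [Finset.ssubset_iff_of_subset]
    · exact ⟨a, Finset.mem_filter.2 ⟨Finset.mem_erase.2 ⟨hap, ha⟩, hab⟩, by simp⟩
    · intro x hx
      rw [Finset.mem_filter] at hx ⊢
      exact ⟨hx.1, hx.2.trans hab⟩
  have klt : ∀ a ∈ S, ∀ b ∈ S, k a < k b → b ≠ p ∧ (a ≠ p → τ a < τ b) := by
    intro a ha b hb hab
    have hbp : b ≠ p := by rintro rfl; omega
    refine ⟨hbp, fun hap => ?_⟩
    rcases lt_trichotomy (τ a) (τ b) with h | h | h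
    · exact h
    · rw [hinj a ha hap b hb hbp h] at hab; omega
    · have := kmono b hb hbp a hap h; omega
  refine ⟨k, ?_, ?_⟩
  · intro a ha b hb hab
    by_cases hap : a = p
    · by_cases hbp : b = p
      · rw [hap, hbp]
      · rw [hap, kp, kn b hbp] at hab; omega
    · by_cases hbp : b = p
      · rw [hbp, kp, kn a hap] at hab; omega
      · rcases lt_trichotomy (τ a) (τ b) with h | h | h
        · have := kmono a ha hap b hbp h; omega
        · exact hinj a ha hap b hb hbp h
        · have := kmono b hb hbp a hap h; omega
  · intro a ha b hb c hc hab hbc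
    obtain ⟨hbp, h1⟩ := klt a ha b hb hab
    obtain ⟨hcp, h2⟩ := klt b hb c hc hbc
    have o2 := hlt b hb hbp c hc hcp (h2 hbp)
    by_cases hap : a = p
    · rw [hap]; exact o2
    · have o1 := hlt a ha hap b hb hbp (h1 hap)
      have o3 := hlt a ha hap c hc hcp ((h1 hap).trans (h2 hbp))
      by_contra hcon
      have hle : ori p a b + ori p b c ≤ ori p a c := by
        have : ori a b c = ori p a b + ori p b c - ori p a c := by simp only [ori]; ring
        linarith
      have hab' : a ≠ b := by rintro rfl; omega
      have hcb' : c ≠ b := by rintro rfl; omega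
      refine cp_tri h hb hp ha hc (Ne.symm hbp) hab' hcb'
        (x := 1 - (ori p b c + ori p a b) / ori p a c) (y := ori p b c / ori p a c)
        (z := ori p a b / ori p a c)
        (sub_nonneg.2 ((div_le_one o3).2 (by linarith))) (div_pos o2 o3).le (div_pos o1 o3).le
        (by ring) ?_ ?_
      · field_simp
        simp only [ori]; ring
      · field_simp
        simp only [ori]; ring

section geom
variable {S : Finset Pt} {k : Pt → ℕ}

def Good (S : Finset Pt) (k : Pt → ℕ) : Prop := Set.InjOn k S ∧
    ∀ a ∈ S, ∀ b ∈ S, ∀ c ∈ S, k a < k b → k b < k c → 0 < ori a b c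

theorem ori_swap (a b c : Pt) : ori b a c = - ori a b c := by simp only [ori]; ring
theorem ori_rot (a b c : Pt) : ori a b c = ori c a b := by simp only [ori]; ring
theorem ori_swap2 (a b c : Pt) : ori a c b = - ori a b c := by simp only [ori]; ring

theorem Good.in (hg : Good S k) {a b c : Pt} (ha : a ∈ S) (hb : b ∈ S) (hc : c ∈ S)
    (h1 : k a < k c) (h2 : k c < k b) : ori a b c < 0 := by
  have := hg.2 a ha c hc b hb h1 h2
  rw [ori_swap2] at this; linarith

theorem Good.out (hg : Good S k) {a b c : Pt} (ha : a ∈ S) (hb : b ∈ S) (hc : c ∈ S)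
    (hab : k a < k b) (h : k c < k a ∨ k b < k c) : 0 < ori a b c := by
  rcases h with h | h
  · rw [ori_rot]; exact hg.2 c hc a ha b hb h hab
  · exact hg.2 a ha b hb c hc hab h

theorem Good.zero (hg : Good S k) {a b c : Pt} (ha : a ∈ S) (hb : b ∈ S) (hc : c ∈ S)
    (hab : a ≠ b) (h : ori a b c = 0) : c = a ∨ c = b := by
  have key : ∀ a b, a ∈ S → b ∈ S → k a < k b → ori a b c = 0 → c = a ∨ c = b := by
    intro a b ha hb hab h
    by_contra hcon
    push Not at hcon
    have h1 : k c ≠ k a := fun h => hcon.1 (hg.1 hc ha h)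
    have h2 : k c ≠ k b := fun h => hcon.2 (hg.1 hc hb h)
    by_cases h3 : k a < k c ∧ k c < k b
    · have := hg.in ha hb hc h3.1 h3.2; linarith
    · have := hg.out ha hb hc hab (by omega); linarith
  rcases lt_trichotomy (k a) (k b) with h' | h' | h'
  · exact key a b ha hb h' h
  · exact absurd (hg.1 ha hb h') hab
  · rw [← neg_eq_zero, ← ori_swap] at h
    exact (key b a hb ha h' h).symm

theorem Good.cr (hg : Good S k) {a b c d : Pt} (ha : a ∈ S) (hb : b ∈ S) (hc : c ∈ S)
    (hd : d ∈ S) (h : Cr k a b c d) : ori a b c * ori a b d < 0 := by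
  have key : ∀ a b, a ∈ S → b ∈ S → k a < k b → Cr k a b c d → ori a b c * ori a b d < 0 := by
    intro a b ha hb hab h
    have : (k a < k c ∧ k c < k b ∧ (k d < k a ∨ k b < k d)) ∨
        (k a < k d ∧ k d < k b ∧ (k c < k a ∨ k b < k c)) := by unfold Cr at h; omega
    rcases this with h | h
    · exact mul_neg_of_neg_of_pos (hg.in ha hb hc h.1 h.2.1) (hg.out ha hb hd hab h.2.2)
    · exact mul_neg_of_pos_of_neg (hg.out ha hb hc hab h.2.2) (hg.in ha hb hd h.1 h.2.1)
  rcases lt_trichotomy (k a) (k b) with h' | h' | h'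
  · exact key a b ha hb h' h
  · unfold Cr at h; omega
  · have := key b a hb ha h' h.flip
    rw [ori_swap a b c, ori_swap a b d] at this; linarith

theorem Good.ncr (hg : Good S k) {a b c d : Pt} (ha : a ∈ S) (hb : b ∈ S) (hc : c ∈ S)
    (hd : d ∈ S) (hab : a ≠ b) (h : ¬ Cr k a b c d) : 0 ≤ ori a b c * ori a b d := by
  have key : ∀ a b, a ∈ S → b ∈ S → k a < k b → ¬ Cr k a b c d →
      0 ≤ ori a b c * ori a b d := by
    intro a b ha hb hab h
    by_cases e1 : k c = k a
    · rw [hg.1 hc ha e1]; simp [ori]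
    by_cases e2 : k c = k b
    · rw [hg.1 hc hb e2, show ori a b b = 0 by simp only [ori]; ring]; simp
    by_cases e3 : k d = k a
    · rw [hg.1 hd ha e3]; simp [ori]
    by_cases e4 : k d = k b
    · rw [hg.1 hd hb e4, show ori a b b = 0 by simp only [ori]; ring]; simp
    have : (k a < k c ∧ k c < k b ∧ k a < k d ∧ k d < k b) ∨
        ((k c < k a ∨ k b < k c) ∧ (k d < k a ∨ k b < k d)) := by unfold Cr at h; omega
    rcases this with h | h
    · exact mul_nonneg_of_nonpos_of_nonpos (hg.in ha hb hc h.1 h.2.1).le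
        (hg.in ha hb hd h.2.2.1 h.2.2.2).le
    · exact mul_nonneg (hg.out ha hb hc hab h.1).le (hg.out ha hb hd hab h.2).le
  rcases lt_trichotomy (k a) (k b) with h' | h' | h'
  · exact key a b ha hb h' h
  · exact absurd (hg.1 ha hb h') hab
  · have := key b a hb ha h' (fun hc => h hc.flip)
    rw [ori_swap a b c, ori_swap a b d] at this; linarith

theorem segOf_mk (a b : Pt) : segOf s(a, b) = segment ℝ a b := rfl

theorem ori_seg {a b c d x : Pt} {s t : ℝ} (hst : s + t = 1) (hx : s • c + t • d = x) :
    ori a b x = s * ori a b c + t * ori a b d := by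
  subst hx
  have : s = 1 - t := by linarith
  subst this
  simp only [ori, Prod.fst_add, Prod.snd_add, Prod.smul_fst, Prod.smul_snd, smul_eq_mul]
  ring

theorem ori_seg_self {a b x : Pt} (hx : x ∈ segment ℝ a b) : ori a b x = 0 := by
  obtain ⟨s, t, _, _, hst, hx⟩ := hx
  rw [ori_seg hst hx]
  simp only [ori]; ring

theorem Good.cross (hg : Good S k) {a b c d : Pt} (ha : a ∈ S) (hb : b ∈ S) (hc : c ∈ S)
    (hd : d ∈ S) (h : Cr k a b c d) : ¬ NoCrossPair s(a, b) s(c, d) := by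
  intro hn
  have f := hg.cr ha hb hc hd h
  have g := hg.cr hc hd ha hb h.symm
  have fc : ori a b c ≠ 0 := by intro h; rw [h] at f; simp at f
  have fd : ori a b d ≠ 0 := by intro h; rw [h] at f; simp at f
  have par : ∀ x y : ℝ, x * y < 0 → x - y ≠ 0 ∧ 0 ≤ x / (x - y) ∧ 0 ≤ -y / (x - y) := by
    intro x y h
    rcases mul_neg_iff.1 h with h | h
    · have : 0 < x - y := by linarith
      exact ⟨this.ne', div_nonneg h.1.le this.le, div_nonneg (by linarith) this.le⟩
    · have : x - y < 0 := by linarith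
      exact ⟨this.ne, div_nonneg_of_nonpos h.1.le this.le,
        div_nonneg_of_nonpos (by linarith) this.le⟩
  obtain ⟨n1, p1, q1⟩ := par _ _ f
  obtain ⟨n2, p2, q2⟩ := par _ _ g
  have hD : ori a b c - ori a b d = -(ori c d a - ori c d b) := by simp only [ori]; ring
  let x : Pt := (-ori a b d / (ori a b c - ori a b d)) • c +
    (ori a b c / (ori a b c - ori a b d)) • d
  have hx1 : x ∈ segment ℝ c d := ⟨_, _, q1, p1, by rw [← add_div]; field_simp; ring, rfl⟩
  have hx2 : x ∈ segment ℝ a b := by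
    refine ⟨_, _, q2, p2, by rw [← add_div]; field_simp; ring, ?_⟩
    have hDD : ori c d a - ori c d b = -(ori a b c - ori a b d) := by linarith
    rw [hDD]
    ext
    · simp only [x, Prod.fst_add, Prod.smul_fst, smul_eq_mul]
      field_simp
      simp only [ori]; ring
    · simp only [x, Prod.snd_add, Prod.smul_snd, smul_eq_mul]
      field_simp
      simp only [ori]; ring
  have h0 := ori_seg_self hx2
  have := (hn ⟨hx2, hx1⟩).2
  have : x = c ∨ x = d := by simpa [epts] using this
  rcases this with h | h
  · exact fc (h ▸ h0)
  · exact fd (h ▸ h0)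

theorem Good.nocross (hg : Good S k) {a b c d : Pt} (ha : a ∈ S) (hb : b ∈ S) (hc : c ∈ S)
    (hd : d ∈ S) (hab : a ≠ b) (hcd : c ≠ d) (hne : s(a, b) ≠ s(c, d)) (h : ¬ Cr k a b c d) :
    NoCrossPair s(a, b) s(c, d) := by
  rintro x ⟨hx1, hx2⟩
  have h0 := ori_seg_self hx1
  obtain ⟨s, t, hs, ht, hst, hx⟩ := hx2
  have hf := hg.ncr ha hb hc hd hab h
  rw [ori_seg hst hx] at h0
  suffices hh : (x = c ∨ x = d) ∧ (x = a ∨ x = b) by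
    refine ⟨?_, ?_⟩
    · simpa [epts] using hh.2
    · simpa [epts] using hh.1
  have hnz : ¬ (ori a b c = 0 ∧ ori a b d = 0) := by
    rintro ⟨h1, h2⟩
    rcases hg.zero ha hb hc hab h1 with rfl | rfl <;> rcases hg.zero ha hb hd hab h2 with rfl | rfl
    · exact hcd rfl
    · exact hne rfl
    · exact hne Sym2.eq_swap
    · exact hcd rfl
  have z1 : s * ori a b c = 0 := by
    have : (s * ori a b c) * (t * ori a b d) = (s * t) * (ori a b c * ori a b d) := by ring
    have h1 : 0 ≤ (s * ori a b c) * (t * ori a b d) := by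
      rw [this]; exact mul_nonneg (mul_nonneg hs ht) hf
    have h2 : t * ori a b d = - (s * ori a b c) := by linarith
    rw [h2] at h1
    have : (s * ori a b c) ^ 2 = 0 := by nlinarith [sq_nonneg (s * ori a b c)]
    exact pow_eq_zero_iff (two_ne_zero) |>.1 this
  have z2 : t * ori a b d = 0 := by linarith
  rcases mul_eq_zero.1 z1 with h1 | h1
  · have ht1 : t = 1 := by linarith
    have hxd : x = d := by rw [← hx, h1, ht1]; simp
    rw [ht1, one_mul] at z2
    refine ⟨Or.inr hxd, ?_⟩
    rw [hxd]; exact hg.zero ha hb hd hab z2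
  · rcases mul_eq_zero.1 z2 with h2 | h2
    · have hs1 : s = 1 := by linarith
      have hxd : x = c := by rw [← hx, h2, hs1]; simp
      refine ⟨Or.inl hxd, ?_⟩
      rw [hxd]; exact hg.zero ha hb hc hab h1
    · exact absurd ⟨h1, h2⟩ hnz

theorem tri_half {a b p q r : Pt} (hab : a ≠ b) (hp : 0 ≤ ori a b p) (hq : 0 ≤ ori a b q)
    (hr : 0 ≤ ori a b r) {z : Pt} (hz : z ∈ triInt p q r) (hz0 : ori a b z = 0) : False := by
  have hconv : Convex ℝ {x : Pt | 0 ≤ ori a b x} := by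
    intro x hx y hy s t hs ht hst
    simp only [Set.mem_ofPred_eq] at *
    rw [ori_seg hst rfl]
    positivity
  have hsub : convexHull ℝ ({p, q, r} : Set Pt) ⊆ {x : Pt | 0 ≤ ori a b x} := by
    apply convexHull_min _ hconv
    rintro x (rfl | rfl | rfl)
    exacts [hp, hq, hr]
  let γ : ℝ → Pt := fun ε => (z.1 - ε * (b.2 - a.2), z.2 + ε * (b.1 - a.1))
  have hγ : Continuous γ := by fun_prop
  have h0 : γ 0 = z := by simp [γ]
  have hev : ∀ᶠ ε in nhds (0 : ℝ), 0 ≤ ori a b (γ ε) := by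
    have h1 : {x : Pt | 0 ≤ ori a b x} ∈ nhds (γ 0) := by
      rw [h0]
      exact Filter.mem_of_superset (mem_interior_iff_mem_nhds.1 hz) hsub
    exact hγ.continuousAt h1
  obtain ⟨δ, hδ, hball⟩ := Metric.eventually_nhds_iff.1 hev
  have := hball (y := -(δ / 2)) (by rw [Real.dist_eq, sub_zero, abs_neg, abs_of_pos] <;> linarith)
  have e : ori a b (γ (-(δ / 2))) = ori a b z - (δ / 2) * ((b.1 - a.1) ^ 2 + (b.2 - a.2) ^ 2) := by
    simp only [ori, γ]; ring
  rw [e, hz0] at this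
  have hpos : 0 < (b.1 - a.1) ^ 2 + (b.2 - a.2) ^ 2 := by
    by_contra hc
    apply hab
    have h1 : b.1 - a.1 = 0 := by nlinarith [sq_nonneg (b.1 - a.1), sq_nonneg (b.2 - a.2)]
    have h2 : b.2 - a.2 = 0 := by nlinarith [sq_nonneg (b.1 - a.1), sq_nonneg (b.2 - a.2)]
    ext <;> linarith
  nlinarith [mul_pos hδ hpos]

theorem Good.tri (hg : Good S k) {a b p q r : Pt} (ha : a ∈ S) (hb : b ∈ S) (hp : p ∈ S)
    (hq : q ∈ S) (hr : r ∈ S) (hab : a ≠ b) (h1 : ¬ Cr k a b p q) (h2 : ¬ Cr k a b q r)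
    (h3 : ¬ Cr k a b p r) : Disjoint (segOf s(a, b)) (triInt p q r) := by
  rw [Set.disjoint_left]
  intro z hz1 hz2
  have h0 := ori_seg_self hz1
  have f1 := hg.ncr ha hb hp hq hab h1
  have f2 := hg.ncr ha hb hq hr hab h2
  have f3 := hg.ncr ha hb hp hr hab h3
  have hs : (0 ≤ ori a b p ∧ 0 ≤ ori a b q ∧ 0 ≤ ori a b r) ∨
      (ori a b p ≤ 0 ∧ ori a b q ≤ 0 ∧ ori a b r ≤ 0) := by
    by_contra hc
    rcases lt_trichotomy (ori a b p) 0 with hp' | hp' | hp' <;>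
    rcases lt_trichotomy (ori a b q) 0 with hq' | hq' | hq' <;>
    rcases lt_trichotomy (ori a b r) 0 with hr' | hr' | hr' <;>
    first
    | exact hc (Or.inl ⟨by linarith, by linarith, by linarith⟩)
    | exact hc (Or.inr ⟨by linarith, by linarith, by linarith⟩)
    | nlinarith [mul_neg_of_neg_of_pos hp' hq']
    | nlinarith [mul_neg_of_pos_of_neg hp' hq']
    | nlinarith [mul_neg_of_neg_of_pos hp' hr']
    | nlinarith [mul_neg_of_pos_of_neg hp' hr']
    | nlinarith [mul_neg_of_neg_of_pos hq' hr']
    | nlinarith [mul_neg_of_pos_of_neg hq' hr']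
  rcases hs with ⟨p1, q1, r1⟩ | ⟨p1, q1, r1⟩
  · exact tri_half hab p1 q1 r1 hz2 h0
  · refine tri_half (Ne.symm hab) ?_ ?_ ?_ hz2 ?_ <;> rw [ori_swap] <;> linarith

theorem Good.toCT (hg : Good S k) {E : Finset (Sym2 Pt)} (h : IsPST S E) : CT k S E := by
  obtain ⟨h1, h2, h3, h4⟩ := h
  have mem : ∀ a b, s(a, b) ∈ E → a ≠ b ∧ a ∈ S ∧ b ∈ S := by
    intro a b hab
    have := h1 _ hab
    exact ⟨by simpa using this.1, this.2 a (by simp), this.2 b (by simp)⟩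
  refine ⟨mem, ?_, h3, h4⟩
  intro a b c d hab hcd hc
  have m1 := mem _ _ hab
  have m2 := mem _ _ hcd
  refine hg.cross m1.2.1 m1.2.2 m2.2.1 m2.2.2 hc (h2 _ hab _ hcd ?_)
  intro he
  rcases Sym2.eq_iff.1 he with ⟨rfl, rfl⟩ | ⟨rfl, rfl⟩ <;> unfold Cr at hc <;> omega

theorem Good.ofCT (hg : Good S k) {E : Finset (Sym2 Pt)} (h : CT k S E) : IsPST S E := by
  refine ⟨?_, ?_, h.card, h.conn⟩
  · intro e he
    induction e using Sym2.ind with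
    | _ a b =>
      have := h.mem _ _ he
      refine ⟨by simpa using this.1, ?_⟩
      intro p hp
      rcases Sym2.mem_iff.1 hp with rfl | rfl
      exacts [this.2.1, this.2.2]
  · intro e he f hf hne
    induction e using Sym2.ind with
    | _ a b =>
    induction f using Sym2.ind with
    | _ c d =>
      have m1 := h.mem _ _ he
      have m2 := h.mem _ _ hf
      exact hg.nocross m1.2.1 m1.2.2 m2.2.1 m2.2.2 m1.1 m2.1 hne (h.nc _ _ _ _ he hf)

theorem Good.step (hg : Good S k) {E₁ E₂ : Finset (Sym2 Pt)} (h : CStep k S E₁ E₂) :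
    SimEdgeSlide S E₁ E₂ := by
  obtain ⟨h1, h2, -, π, hb, hπ⟩ := id h
  have hm : ∀ a b, s(a, b) ∈ E₁ ∪ E₂ → a ≠ b ∧ a ∈ S ∧ b ∈ S := by
    intro a b hab
    rcases Finset.mem_union.1 hab with h | h
    · exact h1.mem _ _ h
    · exact h2.mem _ _ h
  have h3' : ∀ a b c d, (s(a, b) ∈ E₁ ∨ s(a, b) ∈ E₂) → (s(c, d) ∈ E₁ ∨ s(c, d) ∈ E₂) →
      ¬ Cr k a b c d := fun a b c d x y =>
    cstep_nc h a b c d x y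
  refine ⟨hg.ofCT h1, hg.ofCT h2, π, ?_, ?_⟩
  · convert hb using 1
    · ext e; simp
    · ext e; simp
  · intro e he
    obtain ⟨he1, he2⟩ := Finset.mem_sdiff.1 he
    have hmaps : π e ∈ E₂ := (hb.mapsTo (show e ∈ {e | e ∈ E₁ ∧ e ∉ E₂} from ⟨he1, he2⟩)).1
    obtain ⟨p, q, r, e1, e2, q1, q2⟩ := hπ e he1 he2
    refine ⟨p, q, r, e1, e2, q1, q2, ?_⟩
    intro g hgm
    rw [e1] at he1
    rw [e2] at hmaps
    induction g using Sym2.ind with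
    | _ a b =>
      have m0 := hm _ _ hgm
      have m1 := h1.mem _ _ he1
      have m2 := h1.mem _ _ q1
      exact hg.tri m0.2.1 m0.2.2 m1.2.1 m1.2.2 m2.2.2 m0.1
        (h3' _ _ _ _ (Finset.mem_union.1 hgm) (Or.inl he1))
        (h3' _ _ _ _ (Finset.mem_union.1 hgm) (Or.inl q1))
        (h3' _ _ _ _ (Finset.mem_union.1 hgm) (Or.inr hmaps))

end geom

/-- on `n` points in convex position, any two trees are connected by `O(log n)`
simultaneous edge slides. -/
theorem stmt_12 :
    ∃ c : ℝ, 0 < c ∧ ∀ n : ℕ, 2 ≤ n → ∀ S : Finset Pt, S.card = n → ConvexPos S →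
      ∀ E E' : Finset (Sym2 Pt), IsPST S E → IsPST S E' →
        ∃ m : ℕ, (m : ℝ) ≤ c * Real.log n ∧ ReachesIn (SimEdgeSlide S) m E E' := by
  refine ⟨2 * (24 * 26), by norm_num, ?_⟩
  intro n hn S hS hc E E' hE hE'
  obtain ⟨k, hg⟩ := exists_key hc
  have hg : Good S k := hg
  obtain ⟨o, ho, hmax⟩ := Finset.exists_max_image S k (Finset.card_pos.1 (by omega))
  obtain ⟨m, hm, r⟩ := reach_star n hS hg.1 (hg.toCT hE) ho hmax
  obtain ⟨m', hm', r'⟩ := reach_star n hS hg.1 (hg.toCT hE') ho hmax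
  refine ⟨m + m', ?_, ?_⟩
  · push_cast; linarith
  · exact (r.trans' (r'.symm' fun _ _ h => h.symm)).map' id fun _ _ h => hg.step h
end
end

section
/- Let S be a finite set of n ≥ 2 points in the plane in general position that is not in convex position. Then there exist two trees T_A = (S,E_A), T_B = (S,E_B) ∈ 𝒯(S) that are edge-disjoint (E_A ∩ E_B = ∅) and compatible, i.e., the graph (S, E_A ∪ E_B) is a noncrossing straight-line graph. -/
open scoped Classical

noncomputable section

lemma pos_of_mul_pos_A {x y : ℝ} (h : 0 < x * y) (hx : 0 ≤ x) : 0 < y := by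
  by_contra hn
  push Not at hn
  nlinarith [mul_nonneg hx (neg_nonneg.mpr hn)]

def crs (p a b : Pt) : ℝ := (a.1 - p.1) * (b.2 - p.2) - (a.2 - p.2) * (b.1 - p.1)

def IsGap (p : Pt) (Q : Finset Pt) (a b : Pt) : Prop :=
  a ∈ Q ∧ b ∈ Q ∧ 0 < crs p a b ∧ ∀ s ∈ Q, 0 < crs p a s → ¬ 0 < crs p s b

lemma crs_swap (p a b : Pt) : crs p a b = - crs p b a := by unfold crs; ring

lemma crs_self (p a : Pt) : crs p a a = 0 := by unfold crs; ring

lemma crs_plu (p a b c d : Pt) :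
    crs p a b * crs p c d - crs p a c * crs p b d + crs p a d * crs p b c = 0 := by
  unfold crs; ring

lemma crs_comb_right (p a b c x : Pt) (α β : ℝ) (h : α + β = 1) (hx : α • a + β • b = x) :
    crs p c x = α * crs p c a + β * crs p c b := by
  subst hx
  have : α = 1 - β := by linarith
  subst this
  simp only [crs, Prod.fst_add, Prod.snd_add, Prod.smul_fst, Prod.smul_snd, smul_eq_mul]
  ring

lemma crs_comb_left (p a b c x : Pt) (α β : ℝ) (h : α + β = 1) (hx : α • a + β • b = x) :
    crs p x c = α * crs p a c + β * crs p b c := by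
  rw [crs_swap, crs_comb_right p a b c x α β h hx, crs_swap p a c, crs_swap p b c]; ring

lemma crs_base (p a : Pt) : crs p p a = 0 := by unfold crs; ring
lemma crs_base' (p a : Pt) : crs p a p = 0 := by unfold crs; ring

lemma crs_ne (p a b : Pt) (hpa : p ≠ a) (h : ¬ Collinear ℝ ({p, a, b} : Set Pt)) :
    crs p a b ≠ 0 := by
  intro h0
  apply h
  rw [collinear_iff_of_mem (p₀ := p) (by simp)]
  refine ⟨a - p, ?_⟩
  have key : ∃ r : ℝ, b = r • (a - p) +ᵥ p := by
    unfold crs at h0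
    by_cases h1 : a.1 - p.1 = 0
    · have h2 : a.2 - p.2 ≠ 0 := by
        intro h2
        apply hpa
        ext <;> linarith
      refine ⟨(b.2 - p.2) / (a.2 - p.2), ?_⟩
      have h3 : b.1 - p.1 = 0 := by
        rw [h1] at h0
        have : (a.2 - p.2) * (b.1 - p.1) = 0 := by linarith
        exact (mul_eq_zero.mp this).resolve_left h2
      ext
      · simp [h1]; linarith
      · simp [h2]
    · refine ⟨(b.1 - p.1) / (a.1 - p.1), ?_⟩
      ext
      · simp [h1]
      · simp
        field_simp
        linarith
  intro q hq
  simp only [Set.mem_insert_iff, Set.mem_singleton_iff] at hq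
  rcases hq with rfl | rfl | rfl
  · exact ⟨0, by simp⟩
  · exact ⟨1, by simp⟩
  · exact key

lemma exists_ext (p s : Pt) (hs : p ≠ s) (F : Finset Pt) (hF : F.Nonempty)
    (h : ∀ x ∈ F, ∀ y ∈ F, 0 < crs p s x * crs p s y) :
    ∃ b ∈ F, ∀ c ∈ F, 0 ≤ crs p b c := by
  obtain ⟨b, hb, hm⟩ := F.exists_max_image
    (fun x => ((s.1 - p.1) * (x.1 - p.1) + (s.2 - p.2) * (x.2 - p.2)) / crs p s x) hF
  refine ⟨b, hb, fun c hc => ?_⟩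
  have h1 := hm c hc
  have h2 := h b hb c hc
  have hb0 : crs p s b ≠ 0 := by rintro h0; simp [h0] at h2
  have hc0 : crs p s c ≠ 0 := by rintro h0; simp [h0] at h2
  have h3 := mul_le_mul_of_nonneg_right h1 h2.le
  have e1 : ∀ X Y : ℝ, X / crs p s c * (crs p s b * crs p s c) = X * crs p s b := by
    intro X _; field_simp
  have e2 : ∀ X Y : ℝ, X / crs p s b * (crs p s b * crs p s c) = X * crs p s c := by
    intro X _; field_simp
  rw [e1 _ 0, e2 _ 0] at h3
  have h4 : 0 < (s.1 - p.1)^2 + (s.2 - p.2)^2 := by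
    by_contra hn
    apply hs
    have : s.1 - p.1 = 0 := by nlinarith [sq_nonneg (s.1 - p.1), sq_nonneg (s.2 - p.2)]
    have : s.2 - p.2 = 0 := by nlinarith [sq_nonneg (s.1 - p.1), sq_nonneg (s.2 - p.2)]
    ext <;> linarith
  have h5 : 0 ≤ ((s.1 - p.1)^2 + (s.2 - p.2)^2) * crs p b c := by
    unfold crs at h3 ⊢
    linarith
  exact nonneg_of_mul_nonneg_right h5 h4

lemma exists_ext' (p s : Pt) (hs : p ≠ s) (F : Finset Pt) (hF : F.Nonempty)
    (h : ∀ x ∈ F, ∀ y ∈ F, 0 < crs p s x * crs p s y) :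
    ∃ b ∈ F, ∀ c ∈ F, 0 ≤ crs p c b := by
  obtain ⟨b, hb, hm⟩ := F.exists_min_image
    (fun x => ((s.1 - p.1) * (x.1 - p.1) + (s.2 - p.2) * (x.2 - p.2)) / crs p s x) hF
  refine ⟨b, hb, fun c hc => ?_⟩
  have h1 := hm c hc
  have h2 := h b hb c hc
  have hb0 : crs p s b ≠ 0 := by rintro h0; simp [h0] at h2
  have hc0 : crs p s c ≠ 0 := by rintro h0; simp [h0] at h2
  have h3 := mul_le_mul_of_nonneg_right h1 h2.le
  have e1 : ∀ X Y : ℝ, X / crs p s c * (crs p s b * crs p s c) = X * crs p s b := by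
    intro X _; field_simp
  have e2 : ∀ X Y : ℝ, X / crs p s b * (crs p s b * crs p s c) = X * crs p s c := by
    intro X _; field_simp
  rw [e1 _ 0, e2 _ 0] at h3
  have h4 : 0 < (s.1 - p.1)^2 + (s.2 - p.2)^2 := by
    by_contra hn
    apply hs
    have : s.1 - p.1 = 0 := by nlinarith [sq_nonneg (s.1 - p.1), sq_nonneg (s.2 - p.2)]
    have : s.2 - p.2 = 0 := by nlinarith [sq_nonneg (s.1 - p.1), sq_nonneg (s.2 - p.2)]
    ext <;> linarith
  have h5 : 0 ≤ ((s.1 - p.1)^2 + (s.2 - p.2)^2) * crs p c b := by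
    unfold crs at h3 ⊢
    linarith
  exact nonneg_of_mul_nonneg_right h5 h4

lemma ncp_symm {e f : Sym2 Pt} (h : NoCrossPair e f) : NoCrossPair f e := by
  intro x hx
  have := h ⟨hx.2, hx.1⟩
  exact ⟨this.2, this.1⟩

lemma ncp_intro (a b c d : Pt)
    (h : ∀ (x : Pt) (α β γ δ : ℝ), 0 ≤ α → 0 ≤ β → α + β = 1 → α • a + β • b = x →
      0 ≤ γ → 0 ≤ δ → γ + δ = 1 → γ • c + δ • d = x → (x = a ∨ x = b) ∧ (x = c ∨ x = d)) :
    NoCrossPair s(a, b) s(c, d) := by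
  rintro x ⟨h1, h2⟩
  simp only [segOf, Sym2.lift_mk] at h1 h2
  obtain ⟨α, β, hα, hβ, hs, hx⟩ := h1
  obtain ⟨γ, δ, hγ, hδ, hs', hx'⟩ := h2
  have := h x α β γ δ hα hβ hs hx hγ hδ hs' hx'
  simpa [epts] using this

/-- cone emptiness: a ray direction in Q meeting an edge -/
lemma gap_gap {p : Pt} {Q : Finset Pt}
    (hQ : ∀ a ∈ Q, ∀ b ∈ Q, a ≠ b → crs p a b ≠ 0) {a b c d : Pt}
    (h1 : IsGap p Q a b) (h2 : IsGap p Q c d) (hne : s(a, b) ≠ s(c, d)) :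
    NoCrossPair s(a, b) s(c, d) := by
  apply ncp_intro
  intro x α β γ δ hα hβ hs hx hγ hδ hs' hx'
  obtain ⟨ha, hb, hab, hE⟩ := h1
  obtain ⟨hc, hd, hcd, hE'⟩ := h2
  have key : ∀ {a b x : Pt} {α β : ℝ}, 0 ≤ α → 0 ≤ β → α + β = 1 → α • a + β • b = x →
      0 < crs p a b → x = a ∨ x = b ∨ (0 < crs p a x ∧ 0 < crs p x b) := by
    intro a b x α β hα hβ hs hx hab
    rcases hα.eq_or_lt with h | h
    · right; left
      subst h
      have : β = 1 := by linarith
      subst this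
      simpa using hx.symm
    rcases hβ.eq_or_lt with h' | h'
    · left
      subst h'
      have : α = 1 := by linarith
      subst this
      simpa using hx.symm
    right; right
    rw [crs_comb_right p a b a x α β hs hx, crs_comb_left p a b b x α β hs hx, crs_self, crs_self]
    constructor <;> simp <;> positivity
  have k1 := key hα hβ hs hx hab
  have k2 := key hγ hδ hs' hx' hcd
  rcases k1 with k1 | k1 | k1
  · refine ⟨Or.inl k1, ?_⟩
    rcases k2 with k2 | k2 | k2
    · exact Or.inl k2
    · exact Or.inr k2
    · exact absurd k2.2 (hE' x (k1 ▸ ha) k2.1)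
  · refine ⟨Or.inr k1, ?_⟩
    rcases k2 with k2 | k2 | k2
    · exact Or.inl k2
    · exact Or.inr k2
    · exact absurd k2.2 (hE' x (k1 ▸ hb) k2.1)
  rcases k2 with k2 | k2 | k2
  · exact absurd k1.2 (hE x (k2 ▸ hc) k1.1)
  · exact absurd k1.2 (hE x (k2 ▸ hd) k1.1)
  exfalso
  have main : ∀ {a b c : Pt}, 0 < crs p a b → 0 < crs p a x → 0 < crs p x b → 0 < crs p c x →
      0 < crs p a c → 0 < crs p c b := by
    intro a b c hab hax hxb hcx hac
    have := crs_plu p a c x b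
    have h3 : 0 < crs p a x * crs p c b := by
      nlinarith [mul_pos hac hxb, mul_pos hab hcx]
    exact pos_of_mul_pos_A h3 hax.le
  have hac : a = c := by
    by_contra hac
    rcases lt_or_gt_of_ne (hQ a ha c hc hac) with h | h
    · have h' : 0 < crs p c a := by rw [crs_swap]; linarith
      exact hE' a ha h' (main hcd k2.1 k2.2 k1.1 h')
    · exact hE c hc h (main hab k1.1 k1.2 k2.1 h)
  subst hac
  have hbd : b = d := by
    by_contra hbd
    rcases lt_or_gt_of_ne (hQ b hb d hd hbd) with h | h
    · have h' : 0 < crs p d b := by rw [crs_swap]; linarith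
      exact hE d hd hcd h'
    · exact hE' b hb hab h
  subst hbd
  exact hne rfl

lemma gap_spoke {p : Pt} {Q : Finset Pt}
    (hQ : ∀ a ∈ Q, ∀ b ∈ Q, a ≠ b → crs p a b ≠ 0) {a b c : Pt}
    (h1 : IsGap p Q a b) (hc : c ∈ Q) :
    NoCrossPair s(a, b) s(p, c) := by
  apply ncp_intro
  intro x α β γ δ hα hβ hs hx hγ hδ hs' hx'
  obtain ⟨ha, hb, hab, hE⟩ := h1
  have ea := crs_comb_right p a b a x α β hs hx
  have eb := crs_comb_left p a b b x α β hs hx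
  have ea' := crs_comb_right p p c a x γ δ hs' hx'
  have eb' := crs_comb_left p p c b x γ δ hs' hx'
  rw [crs_self] at ea eb
  rw [crs_base'] at ea'
  rw [crs_base] at eb'
  have hδ0 : 0 < δ := by
    rcases hδ.eq_or_lt with h | h
    · subst h
      exfalso
      have : (α + β) * crs p a b = 0 := by linarith
      rw [hs] at this
      linarith
    · exact h
  rcases hα.eq_or_lt with h | h
  · subst h
    have : β = 1 := by linarith
    subst this
    have hxb : x = b := by simpa using hx.symm
    refine ⟨Or.inr hxb, Or.inr ?_⟩
    by_contra hne
    have := hQ c hc b hb (by rintro rfl; exact hne hxb)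
    have h2 : δ * crs p c b = 0 := by linarith
    exact (mul_ne_zero hδ0.ne' this) h2
  rcases hβ.eq_or_lt with h' | h'
  · subst h'
    have : α = 1 := by linarith
    subst this
    have hxb : x = a := by simpa using hx.symm
    refine ⟨Or.inl hxb, Or.inr ?_⟩
    by_contra hne
    have := hQ a ha c hc (by rintro rfl; exact hne hxb)
    have h2 : δ * crs p a c = 0 := by linarith
    exact (mul_ne_zero hδ0.ne' this) h2
  exfalso
  have p1 := mul_pos h hab
  have p2 := mul_pos h' hab
  have q1 : 0 < δ * crs p a c := by linarith
  have q2 : 0 < δ * crs p c b := by linarith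
  exact hE c hc (pos_of_mul_pos_A q1 hδ) (pos_of_mul_pos_A q2 hδ)

lemma spoke_spoke {p c d : Pt} (h : crs p c d ≠ 0) :
    NoCrossPair s(p, c) s(p, d) := by
  apply ncp_intro
  intro x α β γ δ hα hβ hs hx hγ hδ hs' hx'
  have e1 := crs_comb_left p p c d x α β hs hx
  have e2 := crs_comb_left p p d d x γ δ hs' hx'
  rw [crs_base] at e1 e2
  rw [crs_self] at e2
  have : β * crs p c d = 0 := by linarith
  have hb : β = 0 := (mul_eq_zero.mp this).resolve_right h
  subst hb
  have : α = 1 := by linarith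
  subst this
  have : x = p := by simpa using hx.symm
  exact ⟨Or.inl this, Or.inl this⟩

lemma exists_pos {p : Pt} {Q : Finset Pt} (hp : p ∉ Q)
    (hQ : ∀ a ∈ Q, ∀ b ∈ Q, a ≠ b → crs p a b ≠ 0)
    (hh : p ∈ convexHull ℝ (Q : Set Pt)) {a : Pt} (ha : a ∈ Q) :
    ∃ b ∈ Q, 0 < crs p a b := by
  by_contra hn
  push Not at hn
  have hc : Convex ℝ {x : Pt | crs p a x < 0 ∨ x = a} := by
    intro x hx y hy α β hα hβ hs
    have e := crs_comb_right p x y a _ α β hs rfl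
    simp only [Set.mem_ofPred_eq] at hx hy ⊢
    rcases hα.eq_or_lt with h | h
    · subst h
      have : β = 1 := by linarith
      subst this
      simpa using hy
    rcases hβ.eq_or_lt with h' | h'
    · subst h'
      have : α = 1 := by linarith
      subst this
      simpa using hx
    rcases hx with hx | rfl
    · left
      rw [e]
      have : crs p a y ≤ 0 := by
        rcases hy with hy | rfl
        · exact hy.le
        · rw [crs_self]
      nlinarith [mul_pos_of_neg_of_neg hx (neg_neg_of_pos h)]
    · rcases hy with hy | rfl
      · left
        rw [e, crs_self]
        nlinarith [mul_pos_of_neg_of_neg hy (neg_neg_of_pos h')]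
      · right
        rw [← add_smul, hs, one_smul]
  have hsub : (Q : Set Pt) ⊆ {x : Pt | crs p a x < 0 ∨ x = a} := by
    intro x hx
    by_cases hxa : x = a
    · exact Or.inr hxa
    · exact Or.inl (lt_of_le_of_ne (hn x hx) (hQ a ha x hx (Ne.symm hxa)))
  have := convexHull_min hsub hc hh
  rcases this with h | h
  · rw [crs_base'] at h; exact lt_irrefl _ h
  · exact hp (h ▸ ha)

lemma exists_gap {p : Pt} {Q : Finset Pt} (hp : p ∉ Q)
    (hQ : ∀ a ∈ Q, ∀ b ∈ Q, a ≠ b → crs p a b ≠ 0)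
    (hh : p ∈ convexHull ℝ (Q : Set Pt)) {a : Pt} (ha : a ∈ Q) :
    ∃ b, IsGap p Q a b := by
  obtain ⟨b0, hb0, hpos⟩ := exists_pos hp hQ hh ha
  obtain ⟨b, hb, hm⟩ := exists_ext p a (by rintro rfl; exact hp ha)
    (Q.filter (fun x => 0 < crs p a x)) ⟨b0, by simp [hb0, hpos]⟩ (by
      intro x hx y hy
      simp only [Finset.mem_filter] at hx hy
      exact mul_pos hx.2 hy.2)
  simp only [Finset.mem_filter] at hb hm
  refine ⟨b, ha, hb.1, hb.2, fun s hs h1 h2 => ?_⟩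
  have := hm s ⟨hs, h1⟩
  rw [crs_swap] at this
  linarith

lemma closed_all {p : Pt} {Q O : Finset Pt} (hp : p ∉ Q)
    (hQ : ∀ a ∈ Q, ∀ b ∈ Q, a ≠ b → crs p a b ≠ 0) (f : Pt → Pt)
    (hf : ∀ a ∈ Q, IsGap p Q a (f a)) (hO : O ⊆ Q) (hne : O.Nonempty)
    (hcl : ∀ x ∈ O, f x ∈ O) {s : Pt} (hs : s ∈ Q) : s ∈ O := by
  by_contra hsO
  have hps : p ≠ s := by rintro rfl; exact hp hs
  have nz : ∀ x ∈ O, crs p s x ≠ 0 := fun x hx =>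
    hQ s hs x (hO hx) (by rintro rfl; exact hsO hx)
  have step1 : ∃ o ∈ O, crs p s o < 0 := by
    by_contra hn
    push Not at hn
    have hn' : ∀ x ∈ O, 0 < crs p s x := fun x hx => lt_of_le_of_ne (hn x hx) (nz x hx).symm
    obtain ⟨b, hb, hm⟩ := exists_ext' p s hps O hne
      (fun x hx y hy => mul_pos (hn' x hx) (hn' y hy))
    have h1 := hm _ (hcl b hb)
    have h2 := (hf b (hO hb)).2.2.1
    rw [crs_swap] at h2
    linarith
  obtain ⟨o, ho, hos⟩ := step1
  obtain ⟨b, hb, hm⟩ := exists_ext' p s hps (O.filter (fun x => crs p s x < 0))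
    ⟨o, by simp [ho, hos]⟩ (by
      intro x hx y hy
      simp only [Finset.mem_filter] at hx hy
      exact mul_pos_of_neg_of_neg hx.2 hy.2)
  simp only [Finset.mem_filter] at hb hm
  obtain ⟨-, -, h3, h4⟩ := hf b (hO hb.1)
  have h5 := h4 s hs (by rw [crs_swap]; linarith)
  have h6 : crs p s (f b) < 0 := lt_of_le_of_ne (not_lt.mp h5) (nz _ (hcl b hb.1))
  have h7 := hm _ ⟨hcl b hb.1, h6⟩
  rw [crs_swap] at h7
  linarith

lemma conn_of_hub {E : Finset (Sym2 Pt)} {S : Finset Pt} {p : Pt}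
    (h : ∀ q ∈ S, Relation.ReflTransGen (fun a b => s(a, b) ∈ E) q p) :
    ∀ x ∈ S, ∀ y ∈ S, Relation.ReflTransGen (fun a b => s(a, b) ∈ E) x y := by
  intro x hx y hy
  refine (h x hx).trans ?_
  have : Std.Symm (fun a b : Pt => s(a, b) ∈ E) := ⟨fun a b hab => by rwa [Sym2.eq_swap]⟩
  exact Std.Symm.symm _ _ (h y hy)

/-- a point set in general position but not in convex position carries two
edge-disjoint compatible noncrossing spanning trees. -/
theorem stmt_13 :
    ∀ S : Finset Pt, 2 ≤ S.card → GenPos S → ¬ ConvexPos S →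
      ∃ E_A E_B : Finset (Sym2 Pt), IsPST S E_A ∧ IsPST S E_B ∧
        E_A ∩ E_B = ∅ ∧ NoCross (E_A ∪ E_B) := by
  intro S hS hG hC
  unfold ConvexPos at hC
  push Not at hC
  obtain ⟨p, hpS, hh⟩ := hC
  set Q := S.erase p with hQdef
  have hcoe : (S : Set Pt) \ {p} = (Q : Set Pt) := by simp [Q]
  rw [hcoe] at hh
  have hp : p ∉ Q := by simp [Q]
  have hQS : ∀ a ∈ Q, a ∈ S := fun a ha => Finset.mem_of_mem_erase ha
  have hQp : ∀ a ∈ Q, a ≠ p := fun a ha => Finset.ne_of_mem_erase ha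
  have hQ : ∀ a ∈ Q, ∀ b ∈ Q, a ≠ b → crs p a b ≠ 0 := fun a ha b hb hab =>
    crs_ne p a b (hQp a ha).symm
      (hG p hpS a (hQS a ha) b (hQS b hb) (hQp a ha).symm (hQp b hb).symm hab)
  have hcard : Q.card + 1 = S.card := Finset.card_erase_add_one hpS
  have hex : ∀ a, ∃ b, a ∈ Q → IsGap p Q a b := fun a => by
    by_cases ha : a ∈ Q
    · obtain ⟨b, hb⟩ := exists_gap hp hQ hh ha
      exact ⟨b, fun _ => hb⟩
    · exact ⟨a, fun h => absurd h ha⟩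
  choose f hf using hex
  obtain ⟨l, hl⟩ : Q.Nonempty := Finset.card_pos.mp (by omega)
  have hfQ : ∀ a ∈ Q, f a ∈ Q := fun a ha => (hf a ha).2.1
  have hfne : ∀ a ∈ Q, f a ≠ a := fun a ha h => by
    have := (hf a ha).2.2.1
    rw [h, crs_self] at this
    exact lt_irrefl _ this
  have hinj : ∀ a ∈ Q, ∀ b ∈ Q, s(a, f a) = s(b, f b) → a = b := by
    intro a ha b hb h
    rcases Sym2.eq_iff.mp h with h | h
    · exact h.1
    · exfalso
      have h1 := (hf a ha).2.2.1
      have h2 := (hf b hb).2.2.1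
      rw [← h.1, crs_swap, ← h.2] at h2
      linarith
  have hsp : ∀ a ∈ Q, ∀ b ∈ Q, s(p, a) ≠ s(b, f b) := by
    intro a ha b hb h
    have : p ∈ s(b, f b) := by rw [← h]; simp
    rcases Sym2.mem_iff.mp this with h | h
    · exact hp (h ▸ hb)
    · exact hp (h ▸ hfQ b hb)
  set EA : Finset (Sym2 Pt) := insert s(l, f l) ((Q.erase l).image (fun a => s(p, a))) with hEA
  set EB : Finset (Sym2 Pt) := insert s(p, l) ((Q.erase l).image (fun a => s(a, f a))) with hEB
  have hclass : ∀ e ∈ EA ∪ EB, (∃ a ∈ Q, e = s(p, a)) ∨ (∃ a ∈ Q, e = s(a, f a)) := by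
    intro e he
    simp only [hEA, hEB, Finset.mem_union, Finset.mem_insert, Finset.mem_image,
      Finset.mem_erase] at he
    rcases he with (rfl | ⟨a, ha, rfl⟩) | (rfl | ⟨a, ha, rfl⟩)
    · exact Or.inr ⟨l, hl, rfl⟩
    · exact Or.inl ⟨a, ha.2, rfl⟩
    · exact Or.inl ⟨l, hl, rfl⟩
    · exact Or.inr ⟨a, ha.2, rfl⟩
  have hNC : NoCross (EA ∪ EB) := by
    intro e he g hg hne
    rcases hclass e he with ⟨a, ha, rfl⟩ | ⟨a, ha, rfl⟩ <;>
      rcases hclass g hg with ⟨b, hb, rfl⟩ | ⟨b, hb, rfl⟩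
    · exact spoke_spoke (hQ a ha b hb (by rintro rfl; exact hne rfl))
    · exact ncp_symm (gap_spoke hQ (hf b hb) ha)
    · exact gap_spoke hQ (hf a ha) hb
    · exact gap_gap hQ (hf a ha) (hf b hb) hne
  have hval : ∀ e ∈ EA ∪ EB, ¬ e.IsDiag ∧ ∀ q ∈ e, q ∈ S := by
    intro e he
    rcases hclass e he with ⟨a, ha, rfl⟩ | ⟨a, ha, rfl⟩
    · refine ⟨by simpa using (hQp a ha).symm, fun q hq => ?_⟩
      rcases Sym2.mem_iff.mp hq with rfl | rfl
      · exact hpS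
      · exact hQS _ ha
    · refine ⟨by simpa using (hfne a ha).symm, fun q hq => ?_⟩
      rcases Sym2.mem_iff.mp hq with rfl | rfl
      · exact hQS _ ha
      · exact hQS _ (hfQ a ha)
  have hlc : (Q.erase l).card + 1 = Q.card := Finset.card_erase_add_one hl
  refine ⟨EA, EB, ⟨fun e he => hval e (Finset.mem_union_left _ he), fun e he g hg =>
    hNC e (Finset.mem_union_left _ he) g (Finset.mem_union_left _ hg), ?_, conn_of_hub (p := p) ?_⟩,
    ⟨fun e he => hval e (Finset.mem_union_right _ he), fun e he g hg =>
    hNC e (Finset.mem_union_right _ he) g (Finset.mem_union_right _ hg), ?_,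
    conn_of_hub (p := p) ?_⟩, ?_, hNC⟩
  · rw [hEA, Finset.card_insert_of_notMem, Finset.card_image_of_injective]
    · omega
    · intro a b h
      exact Sym2.congr_right.mp h
    · intro h
      obtain ⟨a, ha, h⟩ := Finset.mem_image.mp h
      exact hsp a (Finset.mem_of_mem_erase ha) l hl h
  · have hs : ∀ q ∈ Q, q ≠ l → s(q, p) ∈ EA := by
      intro q hq hql
      rw [Sym2.eq_swap]
      exact Finset.mem_insert_of_mem (Finset.mem_image.mpr ⟨q, by simp [hq, hql], rfl⟩)
    intro q hq
    by_cases hqp : q = p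
    · subst hqp; exact Relation.ReflTransGen.refl
    have hqQ : q ∈ Q := by simp [Q, hq, hqp]
    by_cases hql : q = l
    · subst hql
      exact Relation.ReflTransGen.head (Finset.mem_insert_self _ _)
        (Relation.ReflTransGen.single (hs _ (hfQ q hqQ) (hfne q hqQ)))
    · exact Relation.ReflTransGen.single (hs q hqQ hql)
  · rw [hEB, Finset.card_insert_of_notMem, Finset.card_image_of_injOn]
    · omega
    · intro a ha b hb h
      exact hinj a (Finset.mem_of_mem_erase ha) b (Finset.mem_of_mem_erase hb) h
    · intro h
      obtain ⟨a, ha, h⟩ := Finset.mem_image.mp h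
      exact hsp l hl a (Finset.mem_of_mem_erase ha) h.symm
  · intro q hq
    by_cases hqp : q = p
    · subst hqp; exact Relation.ReflTransGen.refl
    have hqQ : q ∈ Q := by simp [Q, hq, hqp]
    suffices h : Relation.ReflTransGen (fun a b => s(a, b) ∈ EB) q l by
      refine h.tail ?_
      show s(l, p) ∈ EB
      rw [Sym2.eq_swap]
      exact Finset.mem_insert_self _ _
    by_contra hn
    apply hn
    have := closed_all (O := Q.filter (fun x => Relation.ReflTransGen (fun a b => s(a, b) ∈ EB) q x))
      hp hQ f hf (Finset.filter_subset _ _)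
      ⟨q, Finset.mem_filter.mpr ⟨hqQ, Relation.ReflTransGen.refl⟩⟩ (by
        intro x hx
        rw [Finset.mem_filter] at hx ⊢
        refine ⟨hfQ x hx.1, hx.2.tail ?_⟩
        have hxl : x ≠ l := by rintro rfl; exact hn hx.2
        exact Finset.mem_insert_of_mem (Finset.mem_image.mpr ⟨x, by simp [hx.1, hxl], rfl⟩)) hl
    exact (Finset.mem_filter.mp this).2
  · rw [← Finset.disjoint_iff_inter_eq_empty, Finset.disjoint_left]
    intro e he he'
    simp only [hEA, hEB, Finset.mem_insert, Finset.mem_image, Finset.mem_erase] at he he'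
    rcases he with rfl | ⟨a, ha, rfl⟩ <;> rcases he' with h | ⟨b, hb, h⟩
    · exact hsp l hl l hl h.symm
    · exact hb.1 (hinj b hb.2 l hl h)
    · have : a = l := Sym2.congr_right.mp h
      exact ha.1 this
    · exact hsp a ha.2 b hb.2 h.symm
end
end
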